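/- arXiv:2503.07844 — 2 statements merged into one kernel-verified Lean document; each statement's English description precedes it below -/
import Mathlib

section
/- Let Y ⊂ ℙⁿ be a hypersurface of degree d whose only singularity is a point y of multiplicity m, with (Y, y) general among such pairs. Let Σ ⊆ ℙ^{n−1} be the variety of lines in Y through y, identified with a subvariety of the hyperplane {x₀ = 0} after placing y at [1:0:…:0]. Then Σ is the common zero locus in ℙ^{n−1} of d − m + 1 homogeneous polynomials of degrees m, m+1, …, d, and if d ≤ m + n − 2 then Σ is smooth of dimension m + n − 2 − d and degree m·(m+1)⋯d = d!/(m−1)!. -/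
open MvPolynomial

noncomputable section

/-- An (affine) algebraic subset of `ℂ^ι`: the common zero locus of a set of polynomials. -/
def IsAlgSet {ι : Type*} (S : Set (ι → ℂ)) : Prop :=
  ∃ T : Set (MvPolynomial ι ℂ), S = {x | ∀ p ∈ T, eval x p = 0}

/-- Irreducibility of a set in the Zariski sense. -/
def AlgIrreducible {ι : Type*} (S : Set (ι → ℂ)) : Prop :=
  S.Nonempty ∧ ∀ A B : Set (ι → ℂ), IsAlgSet A → IsAlgSet B →
    S ⊆ A ∪ B → S ⊆ A ∨ S ⊆ B

/-- Krull dimension of a set, via chains of irreducible algebraic subsets. -/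
def algDim {ι : Type*} (S : Set (ι → ℂ)) : WithBot ℕ∞ :=
  Order.krullDim {T : Set (ι → ℂ) // IsAlgSet T ∧ AlgIrreducible T ∧ T ⊆ S}

/-- A polynomial function on a complex vector space. -/
def IsPolynomialFun {M : Type*} [AddCommGroup M] [Module ℂ M] (g : M → ℂ) : Prop :=
  ∃ (k : ℕ) (l : Fin k → (M →ₗ[ℂ] ℂ)) (p : MvPolynomial (Fin k) ℂ),
    ∀ m, g m = eval (fun i => l i m) p

/-- A Zariski-open subset of a complex vector space: the complement of a common zero
locus of polynomial functions. -/
def IsZariskiOpen {M : Type*} [AddCommGroup M] [Module ℂ M] (U : Set M) : Prop :=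
  ∃ T : Set (M → ℂ), (∀ g ∈ T, IsPolynomialFun g) ∧ Uᶜ = {m | ∀ g ∈ T, g m = 0}

set_option synthInstance.maxHeartbeats 1000000


section

section PolyFun
variable {M : Type*} [AddCommGroup M] [Module ℂ M]

lemma ipf_const (a : ℂ) : IsPolynomialFun (fun _ : M => a) :=
  ⟨0, fun i => i.elim0, C a, fun m => by simp⟩

lemma ipf_lin (l : M →ₗ[ℂ] ℂ) : IsPolynomialFun (fun x : M => l x) :=
  ⟨1, fun _ => l, X 0, fun m => by simp⟩

lemma ipf_add {f g : M → ℂ} (hf : IsPolynomialFun f) (hg : IsPolynomialFun g) :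
    IsPolynomialFun (fun x => f x + g x) := by
  obtain ⟨k, l, p, hp⟩ := hf
  obtain ⟨k', l', p', hp'⟩ := hg
  refine ⟨k + k', Fin.append l l', rename (Fin.castAdd k') p + rename (Fin.natAdd k) p',
    fun m => ?_⟩
  simp [eval_rename, Function.comp_def, hp, hp']

lemma ipf_mul {f g : M → ℂ} (hf : IsPolynomialFun f) (hg : IsPolynomialFun g) :
    IsPolynomialFun (fun x => f x * g x) := by
  obtain ⟨k, l, p, hp⟩ := hf
  obtain ⟨k', l', p', hp'⟩ := hg
  refine ⟨k + k', Fin.append l l', rename (Fin.castAdd k') p * rename (Fin.natAdd k) p',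
    fun m => ?_⟩
  simp [eval_rename, Function.comp_def, hp, hp']

lemma ipf_sum {α : Type*} (s : Finset α) {f : α → M → ℂ} (hf : ∀ a ∈ s, IsPolynomialFun (f a)) :
    IsPolynomialFun (fun x => ∑ a ∈ s, f a x) := by
  classical
  induction s using Finset.induction_on with
  | empty => simpa using ipf_const (M := M) 0
  | insert a s ha ih =>
    simp only [Finset.sum_insert ha]
    exact ipf_add (hf a (by simp)) (ih fun b hb => hf b (by simp [hb]))

lemma ipf_prod {α : Type*} (s : Finset α) {f : α → M → ℂ} (hf : ∀ a ∈ s, IsPolynomialFun (f a)) :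
    IsPolynomialFun (fun x => ∏ a ∈ s, f a x) := by
  classical
  induction s using Finset.induction_on with
  | empty => simpa using ipf_const (M := M) 1
  | insert a s ha ih =>
    simp only [Finset.prod_insert ha]
    exact ipf_mul (hf a (by simp)) (ih fun b hb => hf b (by simp [hb]))

lemma ipf_det {ι : Type*} [Fintype ι] [DecidableEq ι] {A : M → Matrix ι ι ℂ}
    (h : ∀ i j, IsPolynomialFun (fun x => A x i j)) : IsPolynomialFun (fun x => (A x).det) := by
  simp only [Matrix.det_apply']
  exact ipf_sum _ fun σ _ => ipf_mul (ipf_const _) (ipf_prod _ fun i _ => h _ _)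

/-- restriction to a line -/
lemma ipf_line {f : M → ℂ} (hf : IsPolynomialFun f) (a b : M) :
    ∃ p : Polynomial ℂ, ∀ t : ℂ, f (a + t • (b - a)) = p.eval t := by
  obtain ⟨k, l, p, hp⟩ := hf
  refine ⟨aeval (fun i => Polynomial.C (l i a) + Polynomial.X * Polynomial.C (l i (b - a))) p,
    fun t => ?_⟩
  rw [hp]
  clear hp
  induction p using MvPolynomial.induction_on with
  | C a => simp
  | add p q h1 h2 => rw [map_add, map_add, Polynomial.eval_add, h1, h2]
  | mul_X p i h => rw [map_mul, map_mul, Polynomial.eval_mul, h]; simp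

lemma ipf_inter {f g : M → ℂ} (hf : IsPolynomialFun f) (hg : IsPolynomialFun g) {a b : M}
    (ha : f a ≠ 0) (hb : g b ≠ 0) : ∃ c, f c * g c ≠ 0 := by
  obtain ⟨p, hp⟩ := ipf_line hf a b
  obtain ⟨q, hq⟩ := ipf_line hg a b
  have hp0 : p ≠ 0 := by
    rintro rfl; apply ha; simpa using hp 0
  have hq0 : q ≠ 0 := by
    rintro rfl; apply hb; simpa using hq 1
  by_contra! h
  apply mul_ne_zero hp0 hq0
  apply Polynomial.funext
  intro t
  simpa [hp, hq] using h (a + t • (b - a))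

lemma ipf_open {f : M → ℂ} (hf : IsPolynomialFun f) : IsZariskiOpen {x | f x ≠ 0} :=
  ⟨{f}, by simpa using hf, by ext; simp⟩

/-- families of polynomials depending polynomially on parameter -/
def PFam {σ : Type*} (F : M → MvPolynomial σ ℂ) : Prop :=
  ∀ s, IsPolynomialFun (fun x => coeff s (F x))

variable {σ : Type*}

lemma pf_const (p : MvPolynomial σ ℂ) : PFam (fun _ : M => p) := fun _ => ipf_const _

lemma pf_add {F G : M → MvPolynomial σ ℂ} (hF : PFam F) (hG : PFam G) :
    PFam (fun x => F x + G x) := fun s => by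
  simpa using ipf_add (hF s) (hG s)

lemma pf_mul {F G : M → MvPolynomial σ ℂ} (hF : PFam F) (hG : PFam G) :
    PFam (fun x => F x * G x) := fun s => by
  classical
  simp only [coeff_mul]
  exact ipf_sum _ fun a _ => ipf_mul (hF _) (hG _)

lemma pf_sum {α : Type*} (s : Finset α) {f : α → M → MvPolynomial σ ℂ}
    (hf : ∀ a ∈ s, PFam (f a)) : PFam (fun x => ∑ a ∈ s, f a x) := by
  classical
  induction s using Finset.induction_on with
  | empty => simpa using pf_const (M := M) (0 : MvPolynomial σ ℂ)
  | insert a s ha ih =>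
    simp only [Finset.sum_insert ha]
    exact pf_add (hf a (by simp)) (ih fun b hb => hf b (by simp [hb]))

lemma pf_prod {α : Type*} (s : Finset α) {f : α → M → MvPolynomial σ ℂ}
    (hf : ∀ a ∈ s, PFam (f a)) : PFam (fun x => ∏ a ∈ s, f a x) := by
  classical
  induction s using Finset.induction_on with
  | empty => simpa using pf_const (M := M) (1 : MvPolynomial σ ℂ)
  | insert a s ha ih =>
    simp only [Finset.prod_insert ha]
    exact pf_mul (hf a (by simp)) (ih fun b hb => hf b (by simp [hb]))

lemma pf_det {ι : Type*} [Fintype ι] [DecidableEq ι] {A : M → Matrix ι ι (MvPolynomial σ ℂ)}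
    (h : ∀ i j, PFam (fun x => A x i j)) : PFam (fun x => (A x).det) := by
  simp only [Matrix.det_apply']
  exact pf_sum _ fun σ _ => pf_mul (pf_const _) (pf_prod _ fun i _ => h _ _)

lemma pf_lin (l : M →ₗ[ℂ] MvPolynomial σ ℂ) : PFam (fun x => l x) := fun s =>
  ipf_lin (lcoeff ℂ s ∘ₗ l)

lemma pf_pderiv {F : M → MvPolynomial σ ℂ} (hF : PFam F) (j : σ) :
    PFam (fun x => pderiv j (F x)) := fun s => by
  simp only [coeff_pderiv]
  exact ipf_mul (hF _) (ipf_const _) 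

end PolyFun

end

section

/-- the forms have only the trivial common zero -/
def OnlyZero {σ ι : Type*} (F : ι → MvPolynomial σ ℂ) : Prop :=
  ∀ x : σ → ℂ, (∀ i, eval x (F i) = 0) → x = 0

lemma homComp_mul {σ : Type*} {p q : MvPolynomial σ ℂ} {e N : ℕ} (hq : q.IsHomogeneous e)
    (hN : e ≤ N) :
    homogeneousComponent N (p * q) = homogeneousComponent (N - e) p * q := by
  classical
  have h := sum_homogeneousComponent p
  conv_lhs => rw [← h]
  rw [Finset.sum_mul, map_sum]
  have : ∀ i ∈ Finset.range (p.totalDegree + 1),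
      homogeneousComponent N (homogeneousComponent i p * q)
        = if i = N - e then homogeneousComponent (N - e) p * q else 0 := by
    intro i _
    have h1 : (homogeneousComponent i p * q).IsHomogeneous (i + e) :=
      (homogeneousComponent_isHomogeneous i p).mul hq
    rw [homogeneousComponent_of_mem h1]
    split_ifs with h1 h2 h2
    · rw [h2]
    · omega
    · omega
    · rfl
  rw [Finset.sum_congr rfl this, Finset.sum_ite_eq']
  split_ifs with h1
  · rfl
  · rw [homogeneousComponent_eq_zero]
    · simp
    · rw [Finset.mem_range] at h1; omega

lemma homComp_mul' {σ : Type*} {p q : MvPolynomial σ ℂ} {e N : ℕ} (hq : q.IsHomogeneous e)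
    (hN : N < e) :
    homogeneousComponent N (p * q) = 0 := by
  classical
  have h := sum_homogeneousComponent p
  conv_lhs => rw [← h]
  rw [Finset.sum_mul, map_sum]
  refine Finset.sum_eq_zero fun i _ => ?_
  have h1 : (homogeneousComponent i p * q).IsHomogeneous (i + e) :=
      (homogeneousComponent_isHomogeneous i p).mul hq
  rw [homogeneousComponent_of_mem h1, if_neg (by omega)]

/-- homogeneous Nullstellensatz in the form we need -/
lemma null_aux {σ ι : Type*} [Fintype σ] [Fintype ι] (F : ι → MvPolynomial σ ℂ)
    (h : OnlyZero F) :
    ∃ N : ℕ, ∀ s : σ →₀ ℕ, N ≤ s.degree → monomial s (1 : ℂ) ∈ Ideal.span (Set.range F) := by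
  have h1 : ∀ j : σ, ∃ N : ℕ, (X j : MvPolynomial σ ℂ) ^ N ∈ Ideal.span (Set.range F) := by
    intro j
    have : (X j : MvPolynomial σ ℂ) ∈ (Ideal.span (Set.range F)).radical := by
      rw [← vanishingIdeal_zeroLocus_eq_radical (k := ℂ) (K := ℂ)]
      rw [mem_vanishingIdeal_iff]
      intro x hx
      have : x = 0 := h x fun i => by
        have := hx (F i) (Ideal.subset_span ⟨i, rfl⟩)
        simpa [aeval_eq_eval] using this
      simp [this]
    exact this
  choose N hN using h1
  refine ⟨∑ j, N j + 1, fun s hs => ?_⟩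
  have : ∃ j, N j ≤ s j := by
    by_contra! hh
    have : s.degree ≤ ∑ j, N j := by
      rw [Finsupp.degree_eq_sum]
      exact Finset.sum_le_sum fun j _ => (hh j).le
    omega
  obtain ⟨j, hj⟩ := this
  have e : monomial s (1 : ℂ) = monomial (s - Finsupp.single j (N j)) 1 * X j ^ N j := by
    rw [X_pow_eq_monomial, monomial_mul, tsub_add_cancel_of_le, one_mul]
    simpa using hj
  rw [e]
  exact Ideal.mul_mem_left _ _ (hN j)

lemma elim {M : Type*} [AddCommGroup M] [Module ℂ M] {σ ι : Type*} [Fintype σ]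
    [Fintype ι] (F : ι → M → MvPolynomial σ ℂ) (e : ι → ℕ)
    (hF : ∀ i c, (F i c).IsHomogeneous (e i)) (hP : ∀ i, PFam (F i)) (c0 : M)
    (h0 : OnlyZero fun i => F i c0) :
    ∃ P : M → ℂ, IsPolynomialFun P ∧ P c0 ≠ 0 ∧ ∀ c, P c ≠ 0 → OnlyZero fun i => F i c := by
  classical
  obtain ⟨N, hN⟩ := null_aux _ h0
  let T : Finset (σ →₀ ℕ) := Finset.finsuppAntidiag Finset.univ N
  have hT : ∀ s : σ →₀ ℕ, s ∈ T ↔ s.degree = N := by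
    intro s; simp [T, Finset.mem_finsuppAntidiag, Finsupp.degree_eq_sum]
  have h1 : ∀ s : T, ∃ g : ι → MvPolynomial σ ℂ,
      (∀ i c, (g i * F i c).IsHomogeneous N) ∧ ∑ i, g i * F i c0 = monomial s.1 1 := by
    intro s
    have := hN s.1 ((hT _).1 s.2).ge
    rw [Ideal.mem_span_range_iff_exists_fun] at this
    obtain ⟨g, hg⟩ := this
    refine ⟨fun i => if e i ≤ N then homogeneousComponent (N - e i) (g i) else 0, ?_, ?_⟩
    · intro i c
      dsimp only
      split_ifs with hi
      · have := (homogeneousComponent_isHomogeneous (N - e i) (g i)).mul (hF i c)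
        rwa [Nat.sub_add_cancel hi] at this
      · rw [zero_mul]; exact isHomogeneous_zero _ _ _
    · have h2 := congrArg (homogeneousComponent N) hg
      rw [map_sum, homogeneousComponent_of_mem (isHomogeneous_monomial (1:ℂ) ((hT _).1 s.2)),
        if_pos rfl] at h2
      rw [← h2]
      refine Finset.sum_congr rfl fun i _ => ?_
      dsimp only
      split_ifs with hi
      · rw [homComp_mul (hF i c0) hi]
      · rw [homComp_mul' (hF i c0) (by omega), zero_mul]
  choose g hg1 hg2 using h1
  let A : M → Matrix T T ℂ := fun c s s' => coeff s'.1 (∑ i, g s i * F i c)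
  refine ⟨fun c => (A c).det, ipf_det fun s s' => ?_, ?_, ?_⟩
  · exact pf_sum Finset.univ (fun i _ => pf_mul (pf_const (g s i)) (hP i)) s'.1
  · have : A c0 = 1 := by
      ext s s'
      simp only [A, hg2, coeff_monomial, Matrix.one_apply, Subtype.ext_iff]
    simp [this]
  · intro c hc x hx
    have hv : (A c).mulVec (fun s : T => s.1.prod fun i k => x i ^ k) = 0 := by
      ext s
      have hh : (∑ i, g s i * F i c).IsHomogeneous N :=
        IsHomogeneous.sum _ _ _ fun i _ => hg1 s i c
      have e1 : eval x (∑ i, g s i * F i c) = 0 := by simp [hx]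
      rw [eval_eq] at e1
      rw [Pi.zero_apply, ← e1, Matrix.mulVec, dotProduct]
      rw [Finset.sum_coe_sort T (fun s' => coeff s' (∑ i, g s i * F i c) *
        s'.prod fun i k => x i ^ k)]
      symm
      refine Finset.sum_subset (s₂ := T) (fun s' hs' => ?_) (fun s' _ hs' => ?_)
      · rw [hT]
        by_contra h4
        exact mem_support_iff.1 hs' (hh.coeff_eq_zero h4)
      · rw [notMem_support_iff.1 hs', zero_mul]
    have := Matrix.eq_zero_of_mulVec_eq_zero hc hv
    ext j
    have h3 := congrFun this ⟨Finsupp.single j N, by rw [hT]; simp⟩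
    simp at h3
    by_contra hj
    simp_all

end

section

open Topology Filter in
lemma ncard_loc {T E : Type*} [TopologicalSpace T] [TopologicalSpace E] [T2Space E] [Nonempty E]
    (Z : T → Set E) (t0 : T)
    (ha : ∀ z0 ∈ Z t0, ∃ ψ : T → E, ContinuousAt ψ t0 ∧ ψ t0 = z0 ∧
      ∀ᶠ v in 𝓝 (t0, z0), v.2 ∈ Z v.1 ↔ ψ v.1 = v.2)
    (hc : IsCompact (Z t0))
    (hb : ∀ W : Set E, IsOpen W → Z t0 ⊆ W → ∀ᶠ t in 𝓝 t0, Z t ⊆ W) :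
    (Z t0).Finite ∧ ∀ᶠ t in 𝓝 t0, (Z t).ncard = (Z t0).ncard := by
  choose! ψ h1 h2 h3 using ha
  have h4 : ∀ z0 ∈ Z t0, ∃ V : Set E, IsOpen V ∧ z0 ∈ V ∧
      ∀ᶠ t in 𝓝 t0, ∀ z ∈ V, z ∈ Z t ↔ ψ z0 t = z := by
    intro z0 hz0
    have := h3 z0 hz0
    rw [nhds_prod_eq, eventually_prod_iff] at this
    obtain ⟨pa, hpa, pb, hpb, hab⟩ := this
    rw [eventually_nhds_iff] at hpb
    obtain ⟨V, hV, hVo, hzV⟩ := hpb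
    refine ⟨V, hVo, hzV, ?_⟩
    filter_upwards [hpa] with t ht z hz
    exact hab ht (hV z hz)
  choose! V hVo hzV hV using h4
  have hfin : (Z t0).Finite := by
    obtain ⟨S, hS, hS'⟩ := hc.elim_nhds_subcover V (fun z hz => (hVo z hz).mem_nhds (hzV z hz))
    refine (S.finite_toSet).subset ?_
    intro z hz
    have := hS' hz
    simp only [Set.mem_iUnion] at this
    obtain ⟨z0, hz0, hzz⟩ := this
    have h5 := ((hV z0 (hS z0 hz0)).self_of_nhds z hzz).1 hz
    rw [h2 z0 (hS z0 hz0)] at h5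
    rw [← h5]; exact hz0
  refine ⟨hfin, ?_⟩
  obtain ⟨W, hW, hWd⟩ := hfin.t2_separation
  have e1 : ∀ᶠ t in 𝓝 t0, ∀ z0 ∈ Z t0, (∀ z ∈ V z0, z ∈ Z t ↔ ψ z0 t = z) ∧
      ψ z0 t ∈ V z0 ∩ W z0 := by
    rw [hfin.eventually_all]
    intro z0 hz0
    refine (hV z0 hz0).and ?_
    apply (h1 z0 hz0).eventually_mem
    rw [h2 z0 hz0]
    exact ((hVo z0 hz0).inter (hW z0).2).mem_nhds ⟨hzV z0 hz0, (hW z0).1⟩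
  have e2 : ∀ᶠ t in 𝓝 t0, Z t ⊆ ⋃ z0 ∈ Z t0, (V z0 ∩ W z0) := by
    apply hb
    · exact isOpen_biUnion fun z hz => (hVo z hz).inter (hW z).2
    · intro z hz
      simp only [Set.mem_iUnion]
      exact ⟨z, hz, hzV z hz, (hW z).1⟩
  filter_upwards [e1, e2] with t ht1 ht2
  have : Z t = (fun z0 => ψ z0 t) '' Z t0 := by
    ext z
    constructor
    · intro hz
      have := ht2 hz
      simp only [Set.mem_iUnion] at this
      obtain ⟨z0, hz0, hzz⟩ := this
      exact ⟨z0, hz0, ((ht1 z0 hz0).1 z hzz.1).1 hz⟩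
    · rintro ⟨z0, hz0, rfl⟩
      exact ((ht1 z0 hz0).1 _ (ht1 z0 hz0).2.1).2 rfl
  rw [this]
  apply Set.ncard_image_of_injOn
  intro z hz z' hz' hzz
  by_contra hne
  have := hWd hz hz' hne
  refine Set.disjoint_left.1 this (ht1 z hz).2.2 ?_
  have h5 := (ht1 z' hz').2.2
  dsimp only at hzz
  rwa [← hzz] at h5

end

section

def hz {n : ℕ} (z : Fin n → ℂ) : Fin (n + 1) → ℂ := Fin.snoc (α := fun _ => ℂ) z 1

lemma hz_last {n : ℕ} (z : Fin n → ℂ) : hz z (Fin.last n) = 1 := by simp [hz]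
lemma hz_cs {n : ℕ} (z : Fin n → ℂ) (j : Fin n) : hz z j.castSucc = z j := by simp [hz]

lemma hz_deriv {n : ℕ} (p : MvPolynomial (Fin (n + 1)) ℂ) (z : Fin n → ℂ) :
    HasFDerivAt (fun z => eval (hz z) p)
      (∑ j : Fin n, eval (hz z) (pderiv j.castSucc p) •
        (ContinuousLinearMap.proj (R := ℂ) (φ := fun _ : Fin n => ℂ) j)) z := by
  classical
  induction p using MvPolynomial.induction_on with
  | C a =>
    have h := hasFDerivAt_const (𝕜 := ℂ) a z
    simp only [eval_C]
    refine h.congr_fderiv (ContinuousLinearMap.ext fun v => ?_)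
    simp
  | add p q hp hq =>
    simp only [map_add]
    refine (hp.add hq).congr_fderiv (ContinuousLinearMap.ext fun v => ?_)
    simp [add_mul, Finset.sum_add_distrib]
  | mul_X p i hp =>
    have hX : HasFDerivAt (fun z : Fin n → ℂ => hz z i)
        (∑ j : Fin n, eval (hz z) (pderiv j.castSucc (X i : MvPolynomial (Fin (n+1)) ℂ)) •
        (ContinuousLinearMap.proj (R := ℂ) (φ := fun _ : Fin n => ℂ) j)) z := by
      refine Fin.lastCases ?_ (fun i => ?_) i
      · simp only [hz_last]
        have : ∀ j : Fin n, (pderiv j.castSucc (X (Fin.last n) : MvPolynomial (Fin (n+1)) ℂ)) = 0 :=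
          fun j => pderiv_X_of_ne (Fin.castSucc_lt_last j).ne'
        have h := hasFDerivAt_const (𝕜 := ℂ) (1:ℂ) z
        refine h.congr_fderiv (ContinuousLinearMap.ext fun v => ?_)
        simp [this]
      · simp only [hz_cs]
        have : ∀ j : Fin n, (pderiv j.castSucc (X i.castSucc : MvPolynomial (Fin (n+1)) ℂ)) =
            if i = j then 1 else 0 := by
          intro j
          rw [pderiv_X]
          simp [Pi.single_apply]
        have h : HasFDerivAt (fun z : Fin n → ℂ => z i) _ z :=
          (ContinuousLinearMap.proj (R := ℂ) (φ := fun _ : Fin n => ℂ) i).hasFDerivAt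
        refine h.congr_fderiv (ContinuousLinearMap.ext fun v => ?_)
        rw [sum_apply]
        simp only [smul_apply, this, apply_ite (eval (hz z)), map_one, map_zero, smul_eq_mul,
          ite_mul, one_mul, zero_mul]
        simp
    have := hp.mul hX
    simp only [map_mul, eval_X]
    refine this.congr_fderiv (ContinuousLinearMap.ext fun v => ?_)
    simp only [sum_apply, add_apply,
      smul_apply, Derivation.leibniz, map_add, smul_eq_mul, map_mul, eval_X,
      add_mul, Finset.sum_add_distrib, Finset.mul_sum, mul_assoc]

lemma hz_contDiff {n : ℕ} {E : Type*} [NormedAddCommGroup E] [NormedSpace ℂ E]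
    (p : MvPolynomial (Fin (n + 1)) ℂ) (g : E → Fin n → ℂ) (hg : ContDiff ℂ 1 g) :
    ContDiff ℂ 1 (fun z => eval (hz (g z)) p) := by
  induction p using MvPolynomial.induction_on with
  | C a => simpa using contDiff_const
  | add p q hp hq => simpa using hp.add hq
  | mul_X p i hp =>
    simp only [map_mul, eval_X]
    refine hp.mul ?_
    refine Fin.lastCases ?_ (fun i => ?_) i
    · simp only [hz_last]; exact contDiff_const
    · simp only [hz_cs]; fun_prop

lemma loc_impl {n : ℕ} (A B : Fin n → MvPolynomial (Fin (n + 1)) ℂ) (t0 : ℂ) (z0 : Fin n → ℂ)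
    (h0 : ∀ i, eval (hz z0) (A i + C t0 * (B i - A i)) = 0)
    (hdet : (Matrix.of fun i j : Fin n =>
      eval (hz z0) (pderiv j.castSucc (A i + C t0 * (B i - A i)))).det ≠ 0) :
    ∃ ψ : ℂ → (Fin n → ℂ), ContinuousAt ψ t0 ∧ ψ t0 = z0 ∧
      ∀ᶠ v in nhds (t0, z0), (∀ i, eval (hz v.2) (A i + C v.1 * (B i - A i)) = 0) ↔ ψ v.1 = v.2 := by
  classical
  set J := (Matrix.of fun i j : Fin n =>
      eval (hz z0) (pderiv j.castSucc (A i + C t0 * (B i - A i)))) with hJ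
  let f : ℂ × (Fin n → ℂ) → (Fin n → ℂ) := fun v i => eval (hz v.2) (A i + C v.1 * (B i - A i))
  have hf : ContDiff ℂ 1 f := by
    rw [contDiff_pi]
    intro i
    have h1 := hz_contDiff (A i) (fun v : ℂ × (Fin n → ℂ) => v.2) contDiff_snd
    have h2 := hz_contDiff (B i - A i) (fun v : ℂ × (Fin n → ℂ) => v.2) contDiff_snd
    simp only [f, map_add, map_mul, eval_C]
    exact h1.add (contDiff_fst.mul h2)
  have hfa := hf.contDiffAt (x := (t0, z0))
  have hd : HasFDerivAt f (fderiv ℂ f (t0, z0)) (t0, z0) :=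
    (hfa.differentiableAt (by norm_num)).hasFDerivAt
  have hd2 := hd.comp z0 (hasFDerivAt_prodMk_right t0 z0)
  have hd3 : HasFDerivAt (f ∘ fun z => (t0, z)) (J.toLin'.toContinuousLinearMap) z0 := by
    rw [hasFDerivAt_pi']
    intro i
    have := hz_deriv (A i + C t0 * (B i - A i)) z0
    refine this.congr_fderiv ?_
    ext v
    simp [hJ, Matrix.mulVec, dotProduct]
  have heq := hd2.unique hd3
  have hinv : (fderiv ℂ f (t0, z0) ∘L .inr ℂ ℂ (Fin n → ℂ)).IsInvertible := by
    rw [heq]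
    have hu : IsUnit J.det := hdet.isUnit
    refine ContinuousLinearMap.IsInvertible.of_inverse (g := J⁻¹.toLin'.toContinuousLinearMap) ?_ ?_
    · ext1 v
      simp [Matrix.mulVec_mulVec, Matrix.mul_nonsing_inv _ hu]
    · ext1 v
      simp [Matrix.mulVec_mulVec, Matrix.nonsing_inv_mul _ hu]
  refine ⟨hfa.implicitFunction one_ne_zero hinv, ?_, ?_, ?_⟩
  · exact (hfa.hasStrictFDerivAt_implicitFunction one_ne_zero hinv).continuousAt
  · exact hfa.implicitFunction_apply_self one_ne_zero hinv
  · filter_upwards [hfa.eventually_apply_eq_iff_implicitFunction one_ne_zero hinv] with v hv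
    rw [← hv]
    have : f (t0, z0) = 0 := funext h0
    rw [this, funext_iff]
    rfl

end

section

lemma hom_eval {σ : Type*} {p : MvPolynomial σ ℂ} {e : ℕ} (hp : p.IsHomogeneous e) (r : ℂ)
    (x : σ → ℂ) : eval (r • x) p = r ^ e * eval x p := by
  rw [eval_eq, eval_eq, Finset.mul_sum]
  refine Finset.sum_congr rfl fun s hs => ?_
  have h1 : ∑ i ∈ s.support, s i = e := by
    have := hp (mem_support_iff.1 hs)
    simpa [Finsupp.weight_apply, Finsupp.sum] using this
  simp only [Pi.smul_apply, smul_eq_mul, mul_pow, Finset.prod_mul_distrib]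
  rw [Finset.prod_pow_eq_pow_sum, h1]
  ring

lemma eval_cont {σ : Type*} (p : MvPolynomial σ ℂ) : Continuous fun x : σ → ℂ => eval x p :=
  MvPolynomial.continuous_eval p

def Good {n : ℕ} (G : Fin n → MvPolynomial (Fin (n + 1)) ℂ) : Prop :=
  OnlyZero (fun o : Option (Fin n) => o.elim
    (X (Fin.last n) * (Matrix.of fun i j : Fin n => pderiv j.castSucc (G i)).det) G)

lemma Good.last {n : ℕ} {G : Fin n → MvPolynomial (Fin (n + 1)) ℂ} (h : Good G)
    {x : Fin (n + 1) → ℂ} (hx : x ≠ 0) (h0 : ∀ i, eval x (G i) = 0) : x (Fin.last n) ≠ 0 := by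
  intro hl
  apply hx
  apply h
  rintro (_ | i)
  · simp [hl]
  · exact h0 i

lemma Good.det {n : ℕ} {G : Fin n → MvPolynomial (Fin (n + 1)) ℂ} (h : Good G)
    {x : Fin (n + 1) → ℂ} (hx : x ≠ 0) (h0 : ∀ i, eval x (G i) = 0) :
    (Matrix.of fun i j : Fin n => eval x (pderiv j.castSucc (G i))).det ≠ 0 := by
  intro hl
  apply hx
  apply h
  rintro (_ | i)
  · simp only [Option.elim, map_mul, RingHom.map_det, RingHom.mapMatrix_apply]
    have : (Matrix.of fun i j : Fin n => pderiv j.castSucc (G i)).map (eval x) =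
      (Matrix.of fun i j : Fin n => eval x (pderiv j.castSucc (G i))) := rfl
    rw [this, hl, mul_zero]
  · exact h0 i

lemma hz_ne {n : ℕ} (z : Fin n → ℂ) : hz z ≠ 0 := fun h => by
  have := congrFun h (Fin.last n)
  rw [hz_last] at this
  simp at this

/-- dehomogenization -/
def dz {n : ℕ} (x : Fin (n + 1) → ℂ) : Fin n → ℂ := fun j => x j.castSucc / x (Fin.last n)

lemma hz_dz {n : ℕ} {x : Fin (n + 1) → ℂ} (hx : x (Fin.last n) ≠ 0) :
    hz (dz x) = (x (Fin.last n))⁻¹ • x := by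
  ext j
  refine Fin.lastCases ?_ (fun j => ?_) j
  · simp [hz_last, hx]
  · simp [hz_cs, dz, div_eq_inv_mul]

lemma dz_smul_hz {n : ℕ} (z : Fin n → ℂ) {r : ℂ} (hr : r ≠ 0) : dz (r • hz z) = z := by
  ext j
  simp [dz, hz_last, hz_cs, hr]

def AZ {n : ℕ} (G : Fin n → MvPolynomial (Fin (n + 1)) ℂ) : Set (Fin n → ℂ) :=
  {z | ∀ i, eval (hz z) (G i) = 0}

lemma count_loc {n : ℕ} (A B : Fin n → MvPolynomial (Fin (n + 1)) ℂ) (e : Fin n → ℕ)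
    (hA : ∀ i, (A i).IsHomogeneous (e i)) (hB : ∀ i, (B i).IsHomogeneous (e i)) (t0 : ℂ)
    (h0 : Good fun i => A i + C t0 * (B i - A i)) :
    (AZ fun i => A i + C t0 * (B i - A i)).Finite ∧ ∀ᶠ t in nhds t0,
      (AZ fun i => A i + C t * (B i - A i)).ncard = (AZ fun i => A i + C t0 * (B i - A i)).ncard := by
  have hG : ∀ t i, (A i + C t * (B i - A i)).IsHomogeneous (e i) := fun t i =>
    (hA i).add (by simpa using (isHomogeneous_C _ t).mul ((hB i).sub (hA i)))
  have hdzc : ∀ x : Fin (n + 1) → ℂ, x (Fin.last n) ≠ 0 → ContinuousAt dz x := by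
    intro x hx
    rw [continuousAt_pi]
    intro j
    exact (continuous_apply _).continuousAt.div (continuous_apply _).continuousAt hx
  have hne : ∀ x : Fin (n + 1) → ℂ, x ∈ Metric.sphere (0 : Fin (n + 1) → ℂ) 1 → x ≠ 0 := by
    rintro x hx rfl; simp at hx
  have hdz0 : ∀ t x, x (Fin.last n) ≠ 0 → (∀ i, eval x (A i + C t * (B i - A i)) = 0) →
      dz x ∈ AZ fun i => A i + C t * (B i - A i) := by
    intro t x hx h i
    rw [hz_dz hx, hom_eval (hG t i), h i, mul_zero]
  have hnorm : ∀ t z, z ∈ (AZ fun i => A i + C t * (B i - A i)) → ∃ x ∈ Metric.sphere (0 : Fin (n + 1) → ℂ) 1,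
      (∀ i, eval x (A i + C t * (B i - A i)) = 0) ∧ x (Fin.last n) ≠ 0 ∧ dz x = z := by
    intro t z h
    have h1 : (‖hz z‖⁻¹ : ℂ) ≠ 0 := by simpa using hz_ne z
    refine ⟨(‖hz z‖⁻¹ : ℂ) • hz z, ?_, ?_, ?_, ?_⟩
    · simp [norm_smul, hz_ne z]
    · intro i
      rw [hom_eval (hG t i), h i, mul_zero]
    · simpa [hz_last] using hz_ne z
    · exact dz_smul_hz z h1
  have hcont : ∀ i, Continuous fun v : ℂ × (Fin (n + 1) → ℂ) => eval v.2 (A i + C v.1 * (B i - A i)) := by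
    intro i
    simp only [map_add, map_mul, eval_C]
    exact ((eval_cont _).comp continuous_snd).add
      (continuous_fst.mul ((eval_cont _).comp continuous_snd))
  refine ncard_loc (fun t => AZ fun i => A i + C t * (B i - A i)) t0 ?_ ?_ ?_
  · intro z0 hz0
    exact loc_impl A B t0 z0 hz0 (h0.det (hz_ne z0) hz0)
  · have hK : IsCompact (Metric.sphere (0 : Fin (n + 1) → ℂ) 1 ∩
        {x | ∀ i, eval x (A i + C t0 * (B i - A i)) = 0}) := by
      refine (isCompact_sphere _ _).inter_right ?_
      simp only [Set.ofPred_forall]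
      exact isClosed_iInter fun i => isClosed_eq (eval_cont _) continuous_const
    have := hK.image_of_continuousOn (f := dz) (fun x hx =>
      (hdzc x (h0.last (hne x hx.1) hx.2)).continuousWithinAt)
    convert this using 1
    ext z
    constructor
    · intro h
      obtain ⟨x, h1, h2, h3, h4⟩ := hnorm t0 z h
      exact ⟨x, ⟨h1, h2⟩, h4⟩
    · rintro ⟨x, hx, rfl⟩
      exact hdz0 t0 x (h0.last (hne x hx.1) hx.2) hx.2
  · intro W hW hZW
    have := (isCompact_sphere (0 : Fin (n + 1) → ℂ) 1).eventually_forall_of_forall_eventually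
      (x₀ := t0) (P := fun t x => (∀ i, eval x (A i + C t * (B i - A i)) = 0) → dz x ∈ W) ?_
    · filter_upwards [this] with t ht z hz
      obtain ⟨x, h1, h2, h3, h4⟩ := hnorm t z hz
      rw [← h4]
      exact ht x h1 h2
    · intro x hx
      by_cases h : ∀ i, eval x (A i + C t0 * (B i - A i)) = 0
      · have hl := h0.last (hne x hx) h
        have h1 : ∀ᶠ x' in nhds x, dz x' ∈ W :=
          (hdzc x hl).eventually_mem (hW.mem_nhds (hZW (hdz0 t0 x hl h)))
        filter_upwards [(continuous_snd.tendsto (t0, x)).eventually h1] with v hv _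
        exact hv
      · push Not at h
        obtain ⟨i, hi⟩ := h
        filter_upwards [((hcont i).continuousAt (x := (t0, x))).eventually_ne hi] with v hv h2
        exact absurd (h2 i) hv

lemma det_hom {σ ι : Type*} [Fintype ι] [DecidableEq ι] (A : Matrix ι ι (MvPolynomial σ ℂ))
    (e : ι → ℕ) (hA : ∀ i j, (A i j).IsHomogeneous (e i)) : A.det.IsHomogeneous (∑ i, e i) := by
  rw [Matrix.det_apply']
  refine IsHomogeneous.sum _ _ _ fun τ _ => ?_
  have h1 : (∏ i, A (τ i) i).IsHomogeneous (∑ i, e (τ i)) :=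
    IsHomogeneous.prod _ _ _ fun i _ => hA _ _
  rw [Equiv.sum_comp τ e] at h1
  have h2 : ((Equiv.Perm.sign τ : ℤ) : MvPolynomial σ ℂ) = C ((Equiv.Perm.sign τ : ℤ) : ℂ) := by simp
  rw [h2]
  have h3 := (isHomogeneous_C σ (((Equiv.Perm.sign τ : ℤ) : ℂ))).mul h1
  rwa [zero_add] at h3

lemma good_hom {n : ℕ} (G : Fin n → MvPolynomial (Fin (n + 1)) ℂ) (e : Fin n → ℕ)
    (hG : ∀ i, (G i).IsHomogeneous (e i)) (o : Option (Fin n)) :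
    (o.elim (X (Fin.last n) * (Matrix.of fun i j : Fin n => pderiv j.castSucc (G i)).det) G).IsHomogeneous
      (o.elim (1 + ∑ i, (e i - 1)) e) := by
  cases o with
  | none => exact (isHomogeneous_X _ _).mul (det_hom _ _ fun i j => (hG i).pderiv)
  | some i => exact hG i

/-- polynomial families of Good systems -/
lemma good_elim {M : Type*} [AddCommGroup M] [Module ℂ M] {n : ℕ}
    (G : M → Fin n → MvPolynomial (Fin (n + 1)) ℂ) (e : Fin n → ℕ)
    (hG : ∀ c i, (G c i).IsHomogeneous (e i)) (hP : ∀ i, PFam (fun c => G c i)) (c0 : M)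
    (h0 : Good (G c0)) :
    ∃ P : M → ℂ, IsPolynomialFun P ∧ P c0 ≠ 0 ∧ ∀ c, P c ≠ 0 → Good (G c) := by
  refine elim (fun (o : Option (Fin n)) c => o.elim (X (Fin.last n) *
    (Matrix.of fun i j : Fin n => pderiv j.castSucc (G c i)).det) (G c))
    (fun o => o.elim (1 + ∑ i, (e i - 1)) e) (fun o c => good_hom _ _ (hG c) o) ?_ c0 h0
  rintro (_ | i)
  · exact pf_mul (pf_const _) (pf_det fun i j => pf_pderiv (hP i) _)
  · exact hP i

theorem count_eq {n : ℕ} (A B : Fin n → MvPolynomial (Fin (n + 1)) ℂ) (e : Fin n → ℕ)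
    (hA : ∀ i, (A i).IsHomogeneous (e i)) (hB : ∀ i, (B i).IsHomogeneous (e i))
    (gA : Good A) (gB : Good B) :
    (AZ A).Finite ∧ (AZ A).ncard = (AZ B).ncard := by
  have hG : ∀ t i, (A i + C t * (B i - A i)).IsHomogeneous (e i) := fun t i =>
    (hA i).add (by simpa using (isHomogeneous_C _ t).mul ((hB i).sub (hA i)))
  have e0 : (fun i => A i + C (0:ℂ) * (B i - A i)) = A := by simp
  have e1 : (fun i => A i + C (1:ℂ) * (B i - A i)) = B := by simp
  have hfin := (count_loc A B e hA hB 0 (by rw [e0]; exact gA)).1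
  rw [e0] at hfin
  refine ⟨hfin, ?_⟩
  obtain ⟨P, hP, hP0, hPg⟩ := good_elim (M := ℂ) (fun t i => A i + C t * (B i - A i)) e hG
    (fun i => pf_add (pf_const _) (pf_mul (fun s => by
      simp only [coeff_C]
      split_ifs
      · exact ipf_lin (LinearMap.id)
      · exact ipf_const _) (pf_const _))) 0 (by rw [e0]; exact gA)
  obtain ⟨p, hp⟩ := ipf_line hP (0:ℂ) 1
  simp only [zero_add, sub_zero, smul_eq_mul, mul_one] at hp
  have hp0 : p ≠ 0 := by rintro rfl; apply hP0; simpa using hp 0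
  let S : Set ℂ := {t | Good fun i => A i + C t * (B i - A i)}
  have hS : (Sᶜ).Finite := by
    refine (p.roots.toFinset.finite_toSet).subset fun t ht => ?_
    simp only [Finset.mem_coe, Multiset.mem_toFinset, Polynomial.mem_roots hp0, Polynomial.IsRoot,
      ← hp]
    by_contra h
    exact ht (hPg t h)
  have hc : IsPreconnected S := by
    have := (hS.countable.isConnected_compl_of_one_lt_rank (by simp)).isPreconnected
    rwa [compl_compl] at this
  have := hc.constant (f := fun t => (AZ fun i => A i + C t * (B i - A i)).ncard) ?_
    (x := 0) (y := 1) (by simp only [S, Set.mem_ofPred_eq, e0]; exact gA)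
    (by simp only [S, Set.mem_ofPred_eq, e1]; exact gB)
  · simp only [e0, e1] at this
    exact this
  · intro t ht
    have h := (count_loc A B e hA hB t ht).2
    refine ContinuousAt.continuousWithinAt ?_
    exact continuousAt_const.congr (h.mono fun _ h => h.symm)

end

section

lemma proj_count {n : ℕ} (G : Fin n → MvPolynomial (Fin (n + 1)) ℂ) (e : Fin n → ℕ)
    (hG : ∀ i, (G i).IsHomogeneous (e i)) (g : Good G) (hf : (AZ G).Finite) :
    {p : Projectivization ℂ (Fin (n + 1) → ℂ) | ∀ i, eval p.rep (G i) = 0}.Finite ∧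
    {p : Projectivization ℂ (Fin (n + 1) → ℂ) | ∀ i, eval p.rep (G i) = 0}.ncard = (AZ G).ncard := by
  have key : {p : Projectivization ℂ (Fin (n + 1) → ℂ) | ∀ i, eval p.rep (G i) = 0} =
      (fun z => Projectivization.mk ℂ (hz z) (hz_ne z)) '' (AZ G) := by
    ext p
    constructor
    · intro hp
      have hl := g.last p.rep_nonzero hp
      refine ⟨dz p.rep, ?_, ?_⟩
      · intro i
        rw [hz_dz hl, hom_eval (hG i), hp i, mul_zero]
      · have : p = Projectivization.mk ℂ p.rep p.rep_nonzero := p.mk_rep.symm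
        conv_rhs => rw [this]
        dsimp only
        rw [Projectivization.mk_eq_mk_iff']
        exact ⟨_, (hz_dz hl).symm⟩
    · rintro ⟨z, hz1, rfl⟩ i
      obtain ⟨a, ha⟩ := Projectivization.exists_smul_eq_mk_rep ℂ (hz z) (hz_ne z)
      dsimp only
      rw [← ha]
      have := hom_eval (hG i) (a : ℂ) (hz z)
      rw [hz1 i, mul_zero] at this
      exact this
  rw [key]
  refine ⟨hf.image _, Set.InjOn.ncard_image ?_⟩
  intro z _ w _ h
  dsimp only at h
  rw [Projectivization.mk_eq_mk_iff'] at h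
  obtain ⟨a, ha⟩ := h
  have h1 := congrFun ha (Fin.last n)
  simp only [Pi.smul_apply, hz_last, smul_eq_mul, mul_one] at h1
  ext j
  have h2 := congrFun ha j.castSucc
  simp only [Pi.smul_apply, hz_cs, smul_eq_mul, h1, one_mul] at h2
  exact h2.symm

end

section

def expl {n : ℕ} (e : Fin n → ℕ) (b : Fin n → ℂ) (i : Fin n) : MvPolynomial (Fin (n + 1)) ℂ :=
  X i.castSucc ^ e i - C (b i) * X (Fin.last n) ^ e i

lemma expl_hom {n : ℕ} (e : Fin n → ℕ) (b : Fin n → ℂ) (i : Fin n) :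
    (expl e b i).IsHomogeneous (e i) := by
  refine IsHomogeneous.sub (isHomogeneous_X_pow _ _) ?_
  have := (isHomogeneous_C (Fin (n+1)) (b i)).mul (isHomogeneous_X_pow (R := ℂ) (Fin.last n) (e i))
  rwa [zero_add] at this

lemma expl_good {n : ℕ} (e : Fin n → ℕ) (b : Fin n → ℂ) (he : ∀ i, e i ≠ 0)
    (hb : ∀ i, b i = 1 ∨ (b i = 0 ∧ e i = 1)) : Good (expl e b) := by
  classical
  intro x hx
  have h1 : ∀ i, x i.castSucc ^ e i = b i * x (Fin.last n) ^ e i := by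
    intro i
    have := hx (some i)
    simpa [expl, sub_eq_zero] using this
  have hJ : (Matrix.of fun i j : Fin n => pderiv j.castSucc (expl e b i)) =
      Matrix.diagonal fun i => C (e i : ℂ) * X i.castSucc ^ (e i - 1) := by
    ext1 i j
    have hl : pderiv j.castSucc (X (Fin.last n) : MvPolynomial (Fin (n+1)) ℂ) = 0 :=
      pderiv_X_of_ne (Fin.castSucc_lt_last j).ne'
    by_cases hij : i = j
    · subst hij
      simp [expl, Derivation.leibniz_pow, hl]
    · have hl2 : pderiv j.castSucc (X i.castSucc : MvPolynomial (Fin (n+1)) ℂ) = 0 :=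
        pderiv_X_of_ne (by simpa using hij)
      simp [expl, Derivation.leibniz_pow, hl, hl2, hij]
  have h0 := hx none
  simp only [Option.elim, hJ, Matrix.det_diagonal, map_mul, eval_X, map_prod, map_pow, eval_C,
    mul_eq_zero, Finset.prod_eq_zero_iff] at h0
  have hlast : x (Fin.last n) = 0 := by
    rcases h0 with h0 | ⟨i, -, h0⟩
    · exact h0
    · rcases h0 with h0 | h0
      · exact absurd (by exact_mod_cast h0) (he i)
      · rcases hb i with hbi | ⟨-, hei⟩
        · have h2 : x i.castSucc = 0 := eq_zero_of_pow_eq_zero h0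
          have h3 := h1 i
          rw [h2, zero_pow (he i), hbi, one_mul] at h3
          exact eq_zero_of_pow_eq_zero h3.symm
        · simp [hei] at h0
  ext j
  refine Fin.lastCases hlast (fun i => ?_) j
  have h3 := h1 i
  rw [hlast, zero_pow (he i), mul_zero] at h3
  exact eq_zero_of_pow_eq_zero h3

lemma expl_count {n : ℕ} (e : Fin n → ℕ) (b : Fin n → ℂ) (he : ∀ i, e i ≠ 0)
    (hb : ∀ i, b i = 1 ∨ (b i = 0 ∧ e i = 1)) : (AZ (expl e b)).ncard = ∏ i, e i := by
  classical
  have h1 : AZ (expl e b) =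
      (Fintype.piFinset fun i => (Polynomial.nthRoots (e i) (b i)).toFinset : Set (Fin n → ℂ)) := by
    ext z
    simp only [AZ, expl, Set.mem_ofPred_eq, map_sub, map_mul, map_pow, eval_X, eval_C, hz_cs,
      hz_last, one_pow, mul_one, sub_eq_zero, Finset.mem_coe, Fintype.mem_piFinset,
      Multiset.mem_toFinset]
    refine forall_congr' fun i => ?_
    rw [Polynomial.mem_nthRoots (Nat.pos_of_ne_zero (he i))]
  rw [h1, Set.ncard_coe_finset, Fintype.card_piFinset]
  refine Finset.prod_congr rfl fun i _ => ?_
  rcases hb i with h | ⟨h, h'⟩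
  · rw [h]
    have := (Complex.isPrimitiveRoot_exp (e i) (he i)).card_nthRootsFinset
    rw [Polynomial.nthRootsFinset_def] at this
    convert this
  · rw [h, h']
    have : Polynomial.nthRoots 1 (0:ℂ) = {0} := by simp [Polynomial.nthRoots]
    rw [this]; rfl

end

section

lemma lift_gen {R A B : Type*} [CommRing R] [CommRing A] [CommRing B] [Algebra R A]
    [Algebra.FormallySmooth R A] (ψ : R →+* B) (g : B →+* A) (hg : Function.Surjective g)
    (hk' : ∀ a b, g a = 0 → g b = 0 → a * b = 0) (h : g.comp ψ = algebraMap R A) :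
    ∃ s : A →+* B, (∀ x, g (s x) = x) ∧ ∀ r, s (algebraMap R A r) = ψ r := by
  have hk : IsNilpotent (RingHom.ker g) := by
    refine ⟨2, ?_⟩
    rw [Ideal.zero_eq_bot, eq_bot_iff, sq, Ideal.mul_le]
    intro a ha b hb
    exact hk' a b ha hb
  let := ψ.toAlgebra
  let g' : B →ₐ[R] A := { g with commutes' := fun r => by rw [← h]; rfl }
  let s := Algebra.FormallySmooth.liftOfSurjective (AlgHom.id R A) g' hg hk
  refine ⟨s, fun x => ?_, fun r => ?_⟩
  · exact Algebra.FormallySmooth.liftOfSurjective_apply (AlgHom.id R A) g' hg hk x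
  · exact s.commutes r

open scoped IntermediateField.algebraAdjoinAdjoin in
lemma smooth_basis {ι : Type} {v : ι → ℂ} (hv : IsTranscendenceBasis ℚ v) :
    Algebra.FormallySmooth (Algebra.adjoin ℚ (Set.range v)) ℂ := by
  have h1 : Algebra.FormallySmooth (Algebra.adjoin ℚ (Set.range v))
      (IntermediateField.adjoin ℚ (Set.range v)) :=
    .of_isLocalization (nonZeroDivisors _)
  have := hv.isAlgebraic_field
  have h2 : Algebra.IsSeparable (IntermediateField.adjoin ℚ (Set.range v)) ℂ := inferInstance
  have h3 : Algebra.FormallyEtale (IntermediateField.adjoin ℚ (Set.range v)) ℂ :=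
    Algebra.FormallyEtale.of_isSeparable _ ℂ
  exact .comp _ (IntermediateField.adjoin ℚ (Set.range v)) _

lemma deriv_exists {ι : Type} {v : ι → ℂ} (hv : IsTranscendenceBasis ℚ v) (w : ι → ℂ) :
    ∃ D : Derivation ℤ ℂ ℂ, ∀ i, D (v i) = w i := by
  have hs := smooth_basis hv
  let φ : MvPolynomial ι ℚ →ₐ[ℚ] TrivSqZeroExt ℂ ℂ :=
    aeval fun i => TrivSqZeroExt.inl (v i) + TrivSqZeroExt.inr (w i)
  let ψ : (Algebra.adjoin ℚ (Set.range v)) →ₐ[ℚ] TrivSqZeroExt ℂ ℂ :=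
    φ.comp (hv.1.aevalEquiv.symm : _ →ₐ[ℚ] _)
  let g : TrivSqZeroExt ℂ ℂ →ₐ[ℚ] ℂ := TrivSqZeroExt.fstHom ℚ ℂ ℂ
  have hφ : g.comp φ = aeval v := by
    ext i
    simp [g, φ]
  have hk : ∀ a b, g.toRingHom a = 0 → g.toRingHom b = 0 → a * b = 0 := by
    intro a b ha hb
    have ha' : a.fst = 0 := ha
    have hb' : b.fst = 0 := hb
    ext <;> simp [ha', hb']
  have hc : g.toRingHom.comp ψ.toRingHom = algebraMap (Algebra.adjoin ℚ (Set.range v)) ℂ := by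
    ext x
    obtain ⟨y, rfl⟩ := hv.1.aevalEquiv.surjective x
    have := congrArg (fun h => h y) hφ
    have h3 := hv.1.algebraMap_aevalEquiv y
    rw [h3]
    simpa [ψ] using this
  obtain ⟨s, hs1, hs2⟩ := lift_gen (A := ℂ) ψ.toRingHom g.toRingHom
    (fun x => ⟨TrivSqZeroExt.inl x, by simp [g]⟩) hk hc
  · have hfst : ∀ x, (s x).fst = x := hs1
    let L : ℂ →+ ℂ :=
      { toFun := fun x => (s x).snd
        map_zero' := by simp
        map_add' := fun x y => by simp }
    refine ⟨Derivation.mk' L.toIntLinearMap ?_, ?_⟩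
    · intro a b
      change (s (a * b)).snd = a • (s b).snd + b • (s a).snd
      rw [map_mul, TrivSqZeroExt.snd_mul, hfst, hfst]
      simp [mul_comm]
    · intro i
      change (s (v i)).snd = w i
      have h1 := hs2 (hv.1.aevalEquiv (X i))
      have h2 : algebraMap (Algebra.adjoin ℚ (Set.range v)) ℂ (hv.1.aevalEquiv (X i)) = v i := by
        have := hv.1.algebraMap_aevalEquiv (X i)
        simpa using this
      rw [h2] at h1
      rw [h1]
      simp [ψ, φ]

lemma exists_der (ι : Type) [Finite ι] : ∃ a : ι → ℂ, ∀ w : ι → ℂ, ∃ D : Derivation ℤ ℂ ℂ,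
    ∀ i, D (a i) = w i := by
  classical
  obtain ⟨κ, v, hv⟩ := exists_isTranscendenceBasis' ℚ ℂ
  have hinf : Infinite κ := by
    by_contra h
    rw [not_infinite_iff_finite] at h
    have h1 := IsAlgClosed.cardinal_le_max_transcendence_basis' v hv
    have h2 : Cardinal.mk κ ≤ Cardinal.aleph0 := (Cardinal.mk_le_aleph0)
    have h3 : Cardinal.mk ℚ ≤ Cardinal.aleph0 := (Cardinal.mk_le_aleph0)
    have h4 : Cardinal.mk ℂ ≤ Cardinal.aleph0 := h1.trans (by simp [h2, h3])
    rw [Cardinal.mk_complex] at h4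
    exact absurd Cardinal.aleph0_lt_continuum (not_lt.2 h4)
  cases nonempty_fintype ι
  obtain ⟨f⟩ : Nonempty (ι ↪ κ) := ⟨(Fintype.equivFin ι).toEmbedding.trans (Fin.valEmbedding.trans (Infinite.natEmbedding κ))⟩
  refine ⟨fun i => v (f i), fun w => ?_⟩
  obtain ⟨D, hD⟩ := deriv_exists hv (Function.extend f w 0)
  exact ⟨D, fun i => by rw [hD, f.injective.extend_apply]⟩

end

section

open Matrix in
lemma surj_of_minor {ι κ : Type*} [Fintype ι] [DecidableEq ι] [Fintype κ] [DecidableEq κ]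
    (A : Matrix ι κ ℂ) (r : ι → κ) (h : (A.submatrix id r).det ≠ 0) :
    Function.Surjective A.mulVecLin := by
  intro y
  have hu : IsUnit (A.submatrix id r).det := h.isUnit
  let w := (A.submatrix id r)⁻¹ *ᵥ y
  refine ⟨∑ s, w s • Pi.single (r s) 1, ?_⟩
  have h1 : A.submatrix id r *ᵥ w = y := by
    simp [w, Matrix.mulVec_mulVec, Matrix.mul_nonsing_inv _ hu]
  rw [map_sum]
  conv_rhs => rw [← h1]
  ext i
  simp [Matrix.mulVec, dotProduct, mul_comm]

lemma minor_of_surj {ι κ : Type*} [Fintype ι] [DecidableEq ι] [Fintype κ] [DecidableEq κ]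
    (A : Matrix ι κ ℂ) (h : Function.Surjective A.mulVecLin) :
    ∃ r : ι → κ, (A.submatrix id r).det ≠ 0 := by
  by_contra! hr
  obtain ⟨B, hB⟩ := Matrix.mulVec_surjective_iff_exists_right_inverse.1 h
  have h1 : ((A * B).transpose).det = 1 := by rw [hB]; simp
  have h2 : (A * B).transpose = fun s => ∑ j, B j s • A.transpose j := by
    ext s i
    simp [Matrix.mul_apply, mul_comm]
  rw [h2] at h1
  have h3 := (Matrix.detRowAlternating (R := ℂ) (n := ι)).toMultilinearMap.map_sum
    (fun s j => B j s • A.transpose j)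
  have h4 : Matrix.detRowAlternating (R := ℂ) (n := ι) (fun s => ∑ j, B j s • A.transpose j) = 1 := h1
  have h5 : ∀ r : ι → κ, (Matrix.detRowAlternating (R := ℂ) (n := ι)).toMultilinearMap
      (fun s => B (r s) s • A.transpose (r s)) = 0 := by
    intro r
    rw [MultilinearMap.map_smul_univ]
    have : (Matrix.detRowAlternating (R := ℂ) (n := ι)).toMultilinearMap
        (fun s => A.transpose (r s)) = ((A.submatrix id r).transpose).det := rfl
    rw [this, Matrix.det_transpose, hr r, smul_zero]
  simp only [h5, Finset.sum_const_zero] at h3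
  have h6 : (1 : ℂ) = 0 := h4.symm.trans h3
  exact one_ne_zero h6

def pjac {k n : ℕ} (c : Fin k → MvPolynomial (Fin (n + 1)) ℂ) (i : Option (Fin k))
    (j : Fin (n + 1)) : MvPolynomial (Fin (n + 1)) ℂ :=
  i.elim (if j = 0 then 1 else 0) (fun i' => pderiv j (c i'))

def jac {k n : ℕ} (c : Fin k → MvPolynomial (Fin (n + 1)) ℂ) (x : Fin (n + 1) → ℂ) :
    Matrix (Option (Fin k)) (Fin (n + 1)) ℂ :=
  fun i j => Option.elim i (if j = 0 then (1 : ℂ) else 0)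
                (fun i' => eval x (pderiv j (c i')))

lemma eval_pjac {k n : ℕ} (c : Fin k → MvPolynomial (Fin (n + 1)) ℂ) (x : Fin (n + 1) → ℂ) (i j) :
    eval x (pjac c i j) = jac c x i j := by
  cases i with
  | none => simp only [pjac, jac, Option.elim]; split_ifs <;> simp
  | some i => rfl

/-- smooth system: `X 0`, the forms and minors -/
def smsys {k n : ℕ} (c : Fin k → MvPolynomial (Fin (n + 1)) ℂ) :
    Option (Fin k) ⊕ (Option (Fin k) → Fin (n + 1)) → MvPolynomial (Fin (n + 1)) ℂ
  | .inl none => X 0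
  | .inl (some i) => c i
  | .inr r => (Matrix.of fun i s => pjac c i (r s)).det

lemma smsys_iff {k n : ℕ} (c : Fin k → MvPolynomial (Fin (n + 1)) ℂ) :
    OnlyZero (smsys c) ↔ ∀ x : Fin (n + 1) → ℂ, x ≠ 0 → x 0 = 0 → (∀ i, eval x (c i) = 0) →
      Function.Surjective (Matrix.mulVecLin (jac c x)) := by
  have hdet : ∀ x r, eval x (smsys c (.inr r)) = ((jac c x).submatrix id r).det := by
    intro x r
    simp only [smsys, RingHom.map_det]
    congr 1
    ext i j
    simp [eval_pjac]
  constructor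
  · intro h x hx h0 hc
    by_contra hs
    apply hx
    apply h
    rintro ((_ | i) | r)
    · simpa [smsys] using h0
    · exact hc i
    · rw [hdet]
      by_contra hr
      exact hs (surj_of_minor _ r hr)
  · intro h x hx
    by_contra hx0
    obtain ⟨r, hr⟩ := minor_of_surj _ (h x hx0 (by simpa [smsys] using hx (.inl none))
      (fun i => hx (.inl (some i))))
    exact hr (by rw [← hdet]; exact hx (.inr r))

lemma smsys_elim {M : Type*} [AddCommGroup M] [Module ℂ M] {n k : ℕ}
    (c : M → Fin k → MvPolynomial (Fin (n + 1)) ℂ) (e : Fin k → ℕ)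
    (hG : ∀ m i, (c m i).IsHomogeneous (e i)) (hP : ∀ i, PFam (fun m => c m i)) (m0 : M)
    (h0 : OnlyZero (smsys (c m0))) :
    ∃ P : M → ℂ, IsPolynomialFun P ∧ P m0 ≠ 0 ∧ ∀ m, P m ≠ 0 → OnlyZero (smsys (c m)) := by
  classical
  refine elim (fun o m => smsys (c m) o)
    (fun o => Sum.elim (fun o => o.elim 1 e) (fun _ => ∑ i : Option (Fin k), i.elim 0 (fun i => e i - 1)) o)
    ?_ ?_ m0 h0
  · rintro ((_ | i) | r) m
    · exact isHomogeneous_X _ _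
    · exact hG m i
    · refine det_hom _ _ ?_
      rintro (_ | i) j
      · simp only [Matrix.of_apply, pjac, Option.elim]
        split_ifs
        · exact isHomogeneous_one _ _
        · exact isHomogeneous_zero _ _ _
      · exact (hG m i).pderiv
  · rintro ((_ | i) | r)
    · exact pf_const _
    · exact hP i
    · refine pf_det ?_
      rintro (_ | i) j
      · exact pf_const _
      · exact pf_pderiv (hP i) _

def ferm {k n : ℕ} (e : Fin k → ℕ) (a : Fin k × Fin (n + 1) → ℂ) (i : Fin k) :
    MvPolynomial (Fin (n + 1)) ℂ := ∑ j : Fin n, C (a (i, j.succ)) * X j.succ ^ e i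

lemma ferm_smooth {k n : ℕ} (e : Fin k → ℕ) :
    ∃ a : Fin k × Fin (n + 1) → ℂ, OnlyZero (smsys (ferm e a)) := by
  classical
  obtain ⟨a, ha⟩ := exists_der (Fin k × Fin (n + 1))
  refine ⟨a, (smsys_iff _).2 ?_⟩
  intro x hx hx0 hc
  obtain ⟨j0, hj0⟩ : ∃ j : Fin n, x j.succ ≠ 0 := by
    by_contra! h
    apply hx
    ext j
    exact Fin.cases hx0 h j
  have hpd : ∀ (l : Fin k) (j : Fin n), eval x (pderiv j.succ (ferm e a l)) =
      a (l, j.succ) * (e l * x j.succ ^ (e l - 1)) := by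
    intro l j
    rw [ferm, map_sum, map_sum, Finset.sum_eq_single j]
    · simp [Derivation.leibniz_pow]
    · intro j' _ hj'
      have : pderiv j.succ (X j'.succ : MvPolynomial (Fin (n+1)) ℂ) = 0 :=
        pderiv_X_of_ne (by simpa using hj')
      simp [Derivation.leibniz_pow, this]
    · simp
  have hpd0 : ∀ (l : Fin k), eval x (pderiv 0 (ferm e a l)) = 0 := by
    intro l
    rw [ferm, map_sum, map_sum]
    refine Finset.sum_eq_zero fun j _ => ?_
    have : pderiv 0 (X j.succ : MvPolynomial (Fin (n+1)) ℂ) = 0 :=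
        pderiv_X_of_ne (Fin.succ_ne_zero j)
    simp [Derivation.leibniz_pow, this]
  have hD : ∀ i : Fin k, ∃ v : Fin (n + 1) → ℂ, v 0 = 0 ∧ ∀ l,
      ∑ j : Fin n, eval x (pderiv j.succ (ferm e a l)) * v j.succ =
        if l = i then x j0.succ ^ e i else 0 := by
    intro i
    obtain ⟨D, hD⟩ := ha (fun p => if p = (i, j0.succ) then -1 else 0)
    refine ⟨fun j => D (x j), by simp [hx0], fun l => ?_⟩
    have h1 := congrArg D (hc l)
    simp only [ferm, map_sum, map_mul, map_pow, eval_C, eval_X, Derivation.leibniz,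
      Derivation.leibniz_pow, hD, map_zero, smul_eq_mul, Finset.sum_add_distrib] at h1
    have h2 : ∑ j : Fin n, x j.succ ^ e l * (if (l, j.succ) = (i, j0.succ) then (-1 : ℂ) else 0) =
        - if l = i then x j0.succ ^ e i else 0 := by
      rw [Finset.sum_eq_single j0]
      · by_cases hl : l = i
        · subst hl; simp
        · simp [hl]
      · intro j _ hj; simp [hj]
      · simp
    rw [h2] at h1
    simp only [hpd]
    rw [add_neg_eq_zero] at h1
    rw [← h1]
    refine Finset.sum_congr rfl fun j _ => ?_
    simp only [nsmul_eq_mul]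
    ring
  choose v hv0 hv using hD
  have hcol : ∀ i : Fin k, (jac (ferm e a) x).mulVecLin (v i) =
      Pi.single (some i) (x j0.succ ^ e i) := by
    intro i
    ext o
    simp only [Matrix.mulVecLin_apply, Matrix.mulVec, dotProduct]
    rw [Fin.sum_univ_succ, hv0, mul_zero, zero_add]
    cases o with
    | none => simp [jac]
    | some l =>
      have := hv i l
      simp only [jac, Option.elim]
      rw [this]
      simp [Pi.single_apply]
  have hnone : (jac (ferm e a) x).mulVecLin (Pi.single 0 1) = Pi.single none 1 := by
    ext o
    cases o with
    | none => simp [jac]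
    | some l => simp [jac, hpd0]
  intro y
  refine ⟨y none • Pi.single 0 1 + ∑ i, (y (some i) / x j0.succ ^ e i) • v i, ?_⟩
  rw [map_add, map_sum, map_smul, hnone]
  simp only [map_smul, hcol]
  ext o
  cases o with
  | none => simp
  | some l =>
    simp [Finset.sum_apply, Pi.single_apply, hj0]

end

section

lemma aeval_eq_ev {σ : Type*} (x : σ → ℂ) (p : MvPolynomial σ ℂ) : aeval x p = eval x p := rfl

lemma algDim_eq {σ : Type} [Finite σ] (I : Ideal (MvPolynomial σ ℂ)) :
    algDim (zeroLocus ℂ I) = ringKrullDim (MvPolynomial σ ℂ ⧸ I) := by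
  rw [ringKrullDim_quotient, algDim, ← Order.krullDim_orderDual]
  have hae : ∀ (x : σ → ℂ) (p : MvPolynomial σ ℂ), aeval x p = eval x p := aeval_eq_ev
  have hzv : ∀ T : Set (σ → ℂ), IsAlgSet T → zeroLocus ℂ (vanishingIdeal ℂ T) = T := by
    rintro T ⟨S, rfl⟩
    refine le_antisymm ?_ (zeroLocus_vanishingIdeal_le _)
    intro x hx p hp
    rw [← hae]
    exact hx p fun y hy => by rw [hae]; exact hy p hp
  have halg : ∀ J : Ideal (MvPolynomial σ ℂ), IsAlgSet (zeroLocus ℂ J) := fun J =>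
    ⟨J, by ext x; simp [hae]⟩
  have hprime : ∀ T : Set (σ → ℂ), IsAlgSet T → AlgIrreducible T → (vanishingIdeal ℂ T).IsPrime := by
    intro T _ ⟨⟨x, hx⟩, hirr⟩
    refine ⟨?_, ?_⟩
    · intro h
      have := (Ideal.eq_top_iff_one _).1 h x hx
      simp at this
    · intro p q hpq
      have := hirr {x | ∀ r ∈ ({p} : Set (MvPolynomial σ ℂ)), eval x r = 0}
        {x | ∀ r ∈ ({q} : Set (MvPolynomial σ ℂ)), eval x r = 0} ⟨_, rfl⟩ ⟨_, rfl⟩ ?_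
      · rcases this with h | h
        · exact Or.inl fun y hy => by rw [hae]; exact h hy p rfl
        · exact Or.inr fun y hy => by rw [hae]; exact h hy q rfl
      · intro y hy
        have := hpq y hy
        rw [map_mul, mul_eq_zero, hae, hae] at this
        simpa using this
  have hirr : ∀ P : Ideal (MvPolynomial σ ℂ), P.IsPrime → AlgIrreducible (zeroLocus ℂ P) := by
    intro P hP
    have hv := IsPrime.vanishingIdeal_zeroLocus (K := ℂ) P
    refine ⟨?_, ?_⟩
    · rw [Set.nonempty_iff_ne_empty]
      intro h
      rw [h, vanishingIdeal_empty] at hv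
      exact hP.ne_top hv.symm
    · rintro A B ⟨SA, rfl⟩ ⟨SB, rfl⟩ hAB
      by_contra! hcon
      obtain ⟨h1, h2⟩ := hcon
      rw [Set.not_subset] at h1 h2
      obtain ⟨a, ha, ha'⟩ := h1
      obtain ⟨b, hb, hb'⟩ := h2
      simp only [Set.mem_ofPred_eq, not_forall] at ha' hb'
      obtain ⟨p, hp, hpa⟩ := ha'
      obtain ⟨q, hq, hqb⟩ := hb'
      have hpq : p * q ∈ P := by
        rw [← hv]
        intro x hx
        rw [hae, map_mul]
        rcases hAB hx with h | h
        · rw [h p hp, zero_mul]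
        · rw [h q hq, mul_zero]
      rcases hP.mem_or_mem hpq with h | h
      · exact hpa (by rw [← hae]; exact ha p h)
      · exact hqb (by rw [← hae]; exact hb q h)
  refine Order.krullDim_eq_of_orderIso ?_
  refine
    { toFun := fun T => ⟨⟨vanishingIdeal ℂ (OrderDual.ofDual T).1,
        hprime _ (OrderDual.ofDual T).2.1 (OrderDual.ofDual T).2.2.1⟩, ?_⟩
      invFun := fun P => OrderDual.toDual ⟨zeroLocus ℂ P.1.asIdeal, halg _, hirr _ P.1.2, ?_⟩
      left_inv := ?_
      right_inv := ?_
      map_rel_iff' := ?_ }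
  · intro p hp x hx
    exact (OrderDual.ofDual T).2.2.2 hx p hp
  · exact zeroLocus_anti_mono P.2
  · intro T
    apply Subtype.ext
    exact hzv _ (OrderDual.ofDual T).2.1
  · intro P
    apply Subtype.ext
    apply PrimeSpectrum.ext
    exact IsPrime.vanishingIdeal_zeroLocus (K := ℂ) (h := P.1.2) P.1.asIdeal
  · intro T T'
    change vanishingIdeal ℂ (OrderDual.ofDual T).1 ≤ vanishingIdeal ℂ (OrderDual.ofDual T').1 ↔
      (OrderDual.ofDual T').1 ≤ (OrderDual.ofDual T).1
    constructor
    · intro h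
      rw [← hzv _ (OrderDual.ofDual T).2.1, ← hzv _ (OrderDual.ofDual T').2.1]
      exact zeroLocus_anti_mono h
    · exact fun h => vanishingIdeal_anti_mono h

lemma dim_integral {A B : Type*} [CommRing A] [CommRing B] [Algebra A B] [Algebra.IsIntegral A B] :
    ringKrullDim B ≤ ringKrullDim A := by
  refine Order.krullDim_le_of_strictMono
    (fun P => ⟨P.asIdeal.comap (algebraMap A B), inferInstance⟩) ?_
  intro P Q h
  exact Ideal.IsIntegral.comap_lt_comap (R := A) (show P.asIdeal < Q.asIdeal from h)

lemma height_origin {σ : Type} [Fintype σ] :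
    ((Fintype.card σ : ℕ) : WithBot ℕ∞) ≤ ((vanishingIdeal ℂ {(0 : σ → ℂ)}).height : WithBot ℕ∞) := by
  have hd : ringKrullDim (MvPolynomial σ ℂ) = Fintype.card σ := by
    rw [MvPolynomial.ringKrullDim_of_isNoetherianRing]
    simp [ringKrullDim_eq_zero_of_field]
  rw [← hd, ringKrullDim_le_iff_isMaximal_height_le]
  intro m hm
  obtain ⟨x, rfl⟩ := isMaximal_iff_eq_vanishingIdeal_singleton.1 hm
  let f : MvPolynomial σ ℂ →ₐ[ℂ] MvPolynomial σ ℂ := aeval fun i => X i + C (x i)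
  let g : MvPolynomial σ ℂ →ₐ[ℂ] MvPolynomial σ ℂ := aeval fun i => X i - C (x i)
  let E : MvPolynomial σ ℂ ≃ₐ[ℂ] MvPolynomial σ ℂ := AlgEquiv.ofAlgHom f g
    (by ext1 i; simp [f, g, ← algebraMap_eq]) (by ext1 i; simp [f, g, ← algebraMap_eq])
  have hE : ∀ p, aeval (0 : σ → ℂ) (E p) = aeval x p := by
    intro p
    have : (aeval (0 : σ → ℂ)).comp (E : MvPolynomial σ ℂ →ₐ[ℂ] MvPolynomial σ ℂ) = aeval x := by
      ext1 i
      simp [E, f]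
    rw [← this]; rfl
  have h1 : vanishingIdeal ℂ {x} = (vanishingIdeal ℂ {(0 : σ → ℂ)}).comap E.toRingEquiv := by
    ext p
    rw [Ideal.mem_comap, mem_vanishingIdeal_singleton_iff, mem_vanishingIdeal_singleton_iff, ← hE p]
    rfl
  rw [h1, RingEquiv.height_comap]

end

section

lemma dim_upper_aux {σ ι κ B : Type} [CommRing B] [Algebra ℂ B] [Fintype σ] [Fintype ι] [Fintype κ] (F : ι → MvPolynomial σ ℂ)
    (e : ι → ℕ) (hF : ∀ i, (F i).IsHomogeneous (e i)) (y : κ → MvPolynomial σ ℂ)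
    (hy : ∀ j, (y j).IsHomogeneous 1) (h : OnlyZero (Sum.elim F y))
    (π : MvPolynomial σ ℂ →ₐ[ℂ] B) (hπ : Function.Surjective π) (hk : ∀ i, π (F i) = 0) :
    ringKrullDim B ≤ (Fintype.card κ : ℕ) := by
  classical
  obtain ⟨N, hN⟩ := null_aux _ h
  let φ : MvPolynomial κ ℂ →ₐ[ℂ] B := aeval fun j => π (y j)
  let : Algebra (MvPolynomial κ ℂ) (B) := φ.toRingHom.toAlgebra
  have hsm : ∀ (a : MvPolynomial κ ℂ) (b : B), a • b = φ a * b := fun a b => rfl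
  let T : Set (σ →₀ ℕ) := {s | s.degree ≤ N}
  have hT : T.Finite := Finsupp.finite_of_degree_le N
  let W : Submodule (MvPolynomial κ ℂ) (B) :=
    Submodule.span _ ((fun s => π (monomial s 1)) '' T)
  have hmon : ∀ p : MvPolynomial σ ℂ, (∀ s ∈ p.support, π (monomial s 1) ∈ W) →
      π p ∈ W := by
    intro p hp
    rw [p.as_sum, map_sum]
    refine W.sum_mem fun s hs => ?_
    have : π (monomial s (coeff s p)) =
        (C (coeff s p) : MvPolynomial κ ℂ) • π (monomial s 1) := by
      rw [hsm]
      have h1 : φ (C (coeff s p)) = π (C (coeff s p)) := by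
        rw [← algebraMap_eq, AlgHom.commutes, ← algebraMap_eq, AlgHom.commutes]
      rw [h1, ← map_mul, C_mul_monomial, mul_one]
    rw [this]
    exact W.smul_mem _ (hp s hs)
  have key : ∀ D : ℕ, ∀ p : MvPolynomial σ ℂ, p.IsHomogeneous D → π p ∈ W := by
    intro D
    induction D using Nat.strong_induction_on with
    | _ D ih =>
      intro p hp
      apply hmon
      intro s hs
      have hsD : s.degree = D := by
        have := hp (mem_support_iff.1 hs)
        rw [← this, Finsupp.degree_eq_weight_one]; rfl
      by_cases hDN : D ≤ N
      · exact Submodule.subset_span ⟨s, by simpa [T, hsD] using hDN, rfl⟩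
      · have hm := hN s (by omega)
        rw [Ideal.mem_span_range_iff_exists_fun] at hm
        obtain ⟨c, hc⟩ := hm
        have hhom : (monomial s (1:ℂ)).IsHomogeneous D := isHomogeneous_monomial _ hsD
        have h2 := congrArg (homogeneousComponent D) hc
        rw [homogeneousComponent_of_mem hhom] at h2
        simp only [if_true, Fintype.sum_sum_type, Sum.elim_inl, Sum.elim_inr, map_add, map_sum] at h2
        rw [← h2, map_add, map_sum, map_sum]
        refine W.add_mem (W.sum_mem fun i _ => ?_) (W.sum_mem fun j _ => ?_)
        · have : π (homogeneousComponent D (c (.inl i) * F i)) = 0 := by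
            by_cases he : e i ≤ D
            · rw [homComp_mul (hF i) he, map_mul, hk, mul_zero]
            · rw [homComp_mul' (hF i) (by omega), map_zero]
          rw [this]
          exact W.zero_mem
        · rw [homComp_mul (hy j) (by omega), map_mul, mul_comm]
          have : π (y j) = φ (X j) := by simp [φ]
          rw [this, ← hsm]
          exact W.smul_mem _ (ih (D - 1) (by omega) _ (homogeneousComponent_isHomogeneous _ _))
  have htop : W = ⊤ := by
    rw [eq_top_iff]
    intro b _
    obtain ⟨p, rfl⟩ := hπ b
    refine hmon p fun s _ => key s.degree _ (isHomogeneous_monomial _ rfl)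
  have : Module.Finite (MvPolynomial κ ℂ) (B) :=
    ⟨htop ▸ Submodule.fg_span (hT.image _)⟩
  refine (dim_integral (A := MvPolynomial κ ℂ)).trans ?_
  rw [MvPolynomial.ringKrullDim_of_isNoetherianRing]
  simp [ringKrullDim_eq_zero_of_field]

lemma dim_upper {σ ι κ : Type} [Fintype σ] [Fintype ι] [Fintype κ] (F : ι → MvPolynomial σ ℂ)
    (e : ι → ℕ) (hF : ∀ i, (F i).IsHomogeneous (e i)) (y : κ → MvPolynomial σ ℂ)
    (hy : ∀ j, (y j).IsHomogeneous 1) (h : OnlyZero (Sum.elim F y)) :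
    ringKrullDim (MvPolynomial σ ℂ ⧸ Ideal.span (Set.range F)) ≤ (Fintype.card κ : ℕ) :=
  dim_upper_aux F e hF y hy h (Ideal.Quotient.mkₐ ℂ _) Ideal.Quotient.mk_surjective fun i =>
    Ideal.Quotient.eq_zero_iff_mem.2 (Ideal.subset_span ⟨i, rfl⟩)

lemma dim_lower {σ ι : Type} [Fintype σ] [Fintype ι] (F : ι → MvPolynomial σ ℂ)
    (hF : ∀ i, eval 0 (F i) = 0) :
    ((Fintype.card σ : ℕ) : WithBot ℕ∞) ≤
      ringKrullDim (MvPolynomial σ ℂ ⧸ Ideal.span (Set.range F)) + (Fintype.card ι : ℕ) := by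
  classical
  refine height_origin.trans ?_
  have hs : Set.range F ⊆ (vanishingIdeal ℂ {(0 : σ → ℂ)} : Ideal (MvPolynomial σ ℂ)) := by
    rintro _ ⟨i, rfl⟩
    rw [SetLike.mem_coe, mem_vanishingIdeal_singleton_iff]
    simpa [aeval_eq_ev] using hF i
  haveI : (vanishingIdeal ℂ {(0 : σ → ℂ)} : Ideal (MvPolynomial σ ℂ)).IsPrime :=
    (isMaximal_iff_eq_vanishingIdeal_singleton.2 ⟨0, rfl⟩).isPrime
  refine (Ideal.height_le_ringKrullDim_quotient_add_encard _ hs).trans ?_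
  gcongr
  have : (Set.range F).encard ≤ (Fintype.card ι : ℕ) := by
    rw [← Set.image_univ]
    refine (Set.encard_image_le _ _).trans ?_
    simp
  exact_mod_cast this

lemma dim_eq {σ ι κ : Type} [Fintype σ] [Fintype ι] [Fintype κ] (F : ι → MvPolynomial σ ℂ)
    (e : ι → ℕ) (hF : ∀ i, (F i).IsHomogeneous (e i)) (he : ∀ i, e i ≠ 0) (y : κ → MvPolynomial σ ℂ)
    (hy : ∀ j, (y j).IsHomogeneous 1) (h : OnlyZero (Sum.elim F y))
    (hc : Fintype.card ι + Fintype.card κ = Fintype.card σ) :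
    algDim {x : σ → ℂ | ∀ i, eval x (F i) = 0} = ((Fintype.card κ : ℕ) : WithBot ℕ∞) := by
  have h1 := dim_upper F e hF y hy h
  have h2 := dim_lower F (fun i => by
    have := hom_eval (hF i) 0 0
    rwa [zero_smul, zero_pow (he i), zero_mul] at this)
  have hz : {x : σ → ℂ | ∀ i, eval x (F i) = 0} = zeroLocus ℂ (Ideal.span (Set.range F)) := by
    rw [zeroLocus_span]
    ext x
    simp [aeval_eq_ev]
  rw [hz, algDim_eq]
  refine le_antisymm h1 ?_
  rw [← hc] at h2
  generalize ringKrullDim (MvPolynomial σ ℂ ⧸ Ideal.span (Set.range F)) = D at h1 h2 ⊢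
  induction D with
  | bot => simp at h2
  | coe D =>
    induction D with
    | top => exact le_top
    | coe D =>
      norm_cast at h2 ⊢
      omega

end

section

lemma eval_off {n : ℕ} {p : MvPolynomial (Fin (n + 1)) ℂ}
    (hp : p ∈ supported ℂ {j : Fin (n + 1) | j ≠ 0}) {x y : Fin (n + 1) → ℂ}
    (h : ∀ j, j ≠ 0 → x j = y j) : eval x p = eval y p := by
  rw [mem_supported] at hp
  exact eval₂Hom_congr' rfl (fun i hi _ => h i (hp hi)) rfl

lemma coeffs_zero {m d : ℕ} (a : Fin (d + 1 - m) → ℂ)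
    (h : ∀ u : ℂ, ∑ i : Fin (d + 1 - m), u ^ (d - (m + (i : ℕ))) * a i = 0) (i) : a i = 0 := by
  have h1 : (∑ i : Fin (d + 1 - m), Polynomial.X ^ (d - (m + (i : ℕ))) * Polynomial.C (a i)) = 0 := by
    apply Polynomial.funext
    intro u
    rw [Polynomial.eval_finsetSum, Polynomial.eval_zero, ← h u]
    refine Finset.sum_congr rfl fun i _ => ?_
    rw [Polynomial.eval_mul, Polynomial.eval_pow, Polynomial.eval_X, Polynomial.eval_C]
  have h2 := congrArg (fun p => Polynomial.coeff p (d - (m + (i : ℕ)))) h1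
  simp only [Polynomial.finsetSum_coeff, Polynomial.coeff_mul_C, Polynomial.coeff_X_pow,
    Polynomial.coeff_zero] at h2
  rw [Finset.sum_eq_single i] at h2
  · simpa using h2
  · intro j _ hj
    rw [if_neg, zero_mul]
    intro hh
    apply hj
    ext
    have := i.2
    have := j.2
    omega
  · simp

lemma lines_eq {n m d : ℕ} (c : Fin (d + 1 - m) → MvPolynomial (Fin (n + 1)) ℂ)
    (hc : ∀ i, (c i).IsHomogeneous (m + (i : ℕ)))
    (hs : ∀ i, c i ∈ supported ℂ {j : Fin (n + 1) | j ≠ 0}) :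
    ({x : Fin (n + 1) → ℂ | x 0 = 0 ∧ ∀ u v : ℂ,
            eval (u • (Pi.single 0 1 : Fin (n + 1) → ℂ) + v • x)
              (∑ i : Fin (d + 1 - m),
                X 0 ^ (d - (m + (i : ℕ))) * c i) = 0}
          = {x : Fin (n + 1) → ℂ | x 0 = 0 ∧
              ∀ i, eval x (c i) = 0}) := by
  ext x
  simp only [Set.mem_ofPred_eq]
  refine and_congr_right fun hx => ?_
  have key : ∀ u v : ℂ, eval (u • (Pi.single 0 1 : Fin (n + 1) → ℂ) + v • x)
              (∑ i : Fin (d + 1 - m), X 0 ^ (d - (m + (i : ℕ))) * c i) =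
      ∑ i : Fin (d + 1 - m), u ^ (d - (m + (i : ℕ))) * (v ^ (m + (i : ℕ)) * eval x (c i)) := by
    intro u v
    rw [map_sum]
    refine Finset.sum_congr rfl fun i _ => ?_
    rw [map_mul, map_pow, eval_X, ← hom_eval (hc i)]
    rw [eval_off (hs i) (y := v • x) (fun j hj => by simp [hj])]
    simp [hx]
  simp only [key]
  constructor
  · intro h
    refine coeffs_zero _ fun u => ?_
    simpa using h u 1
  · intro h u v
    simp [h]

def sysS {k q n : ℕ} (c : Fin k → MvPolynomial (Fin (n + 1)) ℂ) (l : Fin q → Fin (n + 1) → ℂ) :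
    Option (Fin k) ⊕ Fin q → MvPolynomial (Fin (n + 1)) ℂ
  | .inl none => X 0
  | .inl (some i) => c i
  | .inr j => ∑ s, C (l j s) * X s

def degS {k q : ℕ} (m : ℕ) : Option (Fin k) ⊕ Fin q → ℕ
  | .inl none => 1
  | .inl (some i) => m + (i : ℕ)
  | .inr _ => 1

def cofS {k q : ℕ} : Option (Fin k) ⊕ Fin q → ℂ
  | .inl none => 0
  | .inl (some _) => 1
  | .inr _ => 1

lemma lin_hom {n : ℕ} (l : Fin (n + 1) → ℂ) :
    (∑ s, C (l s) * X s : MvPolynomial (Fin (n + 1)) ℂ).IsHomogeneous 1 := by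
  refine IsHomogeneous.sum _ _ _ fun s _ => ?_
  simpa using (isHomogeneous_C _ (l s)).mul (isHomogeneous_X ℂ s)

lemma sysS_hom {k q n m : ℕ} (c : Fin k → MvPolynomial (Fin (n + 1)) ℂ) (l : Fin q → Fin (n + 1) → ℂ)
    (hc : ∀ i, (c i).IsHomogeneous (m + (i : ℕ))) (o) : (sysS c l o).IsHomogeneous (degS m o) := by
  rcases o with (_ | i) | j
  · exact isHomogeneous_X ℂ 0
  · exact hc i
  · exact lin_hom _

lemma exists_eps {k q n : ℕ} (h : k + q + 1 = n) :
    ∃ ε : Option (Fin k) ⊕ Fin q ≃ Fin n, (ε (.inl none)).castSucc = 0 := by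
  have hc : Fintype.card (Option (Fin k) ⊕ Fin q) = n := by simp; omega
  have e0 := Fintype.equivFinOfCardEq hc
  refine ⟨e0.trans (Equiv.swap (e0 (.inl none)) ⟨0, by omega⟩), ?_⟩
  simp

lemma prod_degS {k q m : ℕ} : ∏ o : Option (Fin k) ⊕ Fin q, degS m o = ∏ i : Fin k, (m + (i : ℕ)) := by
  simp [Fintype.prod_sum_type, Fintype.prod_option, degS]

lemma prod_fact {m d : ℕ} (hm : 1 ≤ m) (hmd : m ≤ d) :
    ∏ i : Fin (d + 1 - m), (m + (i : ℕ)) = d.factorial / (m - 1).factorial := by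
  rw [Fin.prod_univ_eq_prod_range (fun i => m + i), ← Nat.ascFactorial_eq_prod_range]
  symm
  apply Nat.div_eq_of_eq_mul_right (Nat.factorial_pos _)
  obtain ⟨m, rfl⟩ : ∃ m', m = m' + 1 := ⟨m - 1, by omega⟩
  rw [Nat.add_sub_cancel, Nat.factorial_mul_ascFactorial]
  congr 1
  omega

def cst {k q n : ℕ} (m : ℕ) (ε : Option (Fin k) ⊕ Fin q ≃ Fin n) (i : Fin k) :
    MvPolynomial (Fin (n + 1)) ℂ :=
  X (ε (.inl (some i))).castSucc ^ (m + (i : ℕ)) - X (Fin.last n) ^ (m + (i : ℕ))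

def lst {k q n : ℕ} (ε : Option (Fin k) ⊕ Fin q ≃ Fin n) (j : Fin q) : Fin (n + 1) → ℂ :=
  Pi.single (ε (.inr j)).castSucc 1 - Pi.single (Fin.last n) 1

lemma sys_expl {k q n m : ℕ} (ε : Option (Fin k) ⊕ Fin q ≃ Fin n)
    (hε : (ε (.inl none)).castSucc = 0) (i : Fin n) :
    sysS (cst m ε) (lst ε) (ε.symm i) = expl (fun i => degS m (ε.symm i)) (fun i => cofS (ε.symm i)) i := by
  obtain ⟨o, rfl⟩ := ε.surjective i
  simp only [expl, Equiv.symm_apply_apply]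
  rcases o with (_ | i) | j
  · simp [sysS, degS, cofS, hε]
  · simp [sysS, degS, cofS, cst]
  · simp [sysS, degS, cofS, lst, sub_mul, Finset.sum_sub_distrib, Pi.single_apply,
      apply_ite (C : ℂ → MvPolynomial (Fin (n + 1)) ℂ)]

end

lemma pf_coord {σ : Type*} {k : ℕ} {N : Fin k → Submodule ℂ (MvPolynomial σ ℂ)} (i : Fin k) :
    PFam (fun c : (Π i, N i) => (c i : MvPolynomial σ ℂ)) :=
  pf_lin ((N i).subtype ∘ₗ LinearMap.proj (φ := fun i => N i) i)

lemma ferm_mem {k n : ℕ} (e : Fin k → ℕ) (a : Fin k × Fin (n + 1) → ℂ) (i : Fin k) :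
    ferm e a i ∈ (homogeneousSubmodule (Fin (n + 1)) ℂ (e i)) ⊓
          (Subalgebra.toSubmodule (supported ℂ {j : Fin (n + 1) | j ≠ 0})) := by
  refine ⟨?_, ?_⟩
  · change (ferm e a i).IsHomogeneous (e i)
    refine IsHomogeneous.sum _ _ _ fun s _ => ?_
    simpa using (isHomogeneous_C _ (a (i, s.succ))).mul (isHomogeneous_X_pow (R := ℂ) s.succ (e i))
  · change ferm e a i ∈ supported ℂ {j : Fin (n + 1) | j ≠ 0}
    refine sum_mem fun s _ => mul_mem (Subalgebra.algebraMap_mem _ _) (pow_mem ?_ _)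
    rw [X_mem_supported]
    exact Fin.succ_ne_zero s

lemma cst_mem {k q n m : ℕ} (ε : Option (Fin k) ⊕ Fin q ≃ Fin n)
    (hε : (ε (.inl none)).castSucc = 0) (i : Fin k) :
    cst m ε i ∈ (homogeneousSubmodule (Fin (n + 1)) ℂ (m + (i : ℕ))) ⊓
          (Subalgebra.toSubmodule (supported ℂ {j : Fin (n + 1) | j ≠ 0})) := by
  refine ⟨?_, ?_⟩
  · exact (isHomogeneous_X_pow _ _).sub (isHomogeneous_X_pow _ _)
  · change cst m ε i ∈ supported ℂ {j : Fin (n + 1) | j ≠ 0}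
    refine sub_mem (pow_mem ?_ _) (pow_mem ?_ _) <;> rw [X_mem_supported]
    · intro h
      rw [← hε] at h
      simpa using Fin.castSucc_injective _ h
    · intro h
      have h1 := congrArg Fin.val h
      have h2 := (ε (.inl none)).2
      simp at h1
      omega

lemma sys_count {k q n m : ℕ} (hm : 1 ≤ m) (ε : Option (Fin k) ⊕ Fin q ≃ Fin n)
    (c : Fin k → MvPolynomial (Fin (n + 1)) ℂ)
    (hc : ∀ i, (c i).IsHomogeneous (m + (i : ℕ))) (l : Fin q → Fin (n + 1) → ℂ)
    (hg : Good fun i => sysS c l (ε.symm i)) :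
    ({p : Projectivization ℂ (Fin (n + 1) → ℂ) |
                p.rep 0 = 0 ∧ (∀ i, eval p.rep (c i) = 0) ∧
                ∀ j, ∑ s, l j s * p.rep s = 0}).Finite ∧
            ({p : Projectivization ℂ (Fin (n + 1) → ℂ) |
                p.rep 0 = 0 ∧ (∀ i, eval p.rep (c i) = 0) ∧
                ∀ j, ∑ s, l j s * p.rep s = 0}).ncard
              = ∏ i : Fin k, (m + (i : ℕ)) := by
  have hset : {p : Projectivization ℂ (Fin (n + 1) → ℂ) |
                p.rep 0 = 0 ∧ (∀ i, eval p.rep (c i) = 0) ∧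
                ∀ j, ∑ s, l j s * p.rep s = 0} =
      {p : Projectivization ℂ (Fin (n + 1) → ℂ) | ∀ i, eval p.rep (sysS c l (ε.symm i)) = 0} := by
    ext p
    simp only [Set.mem_ofPred_eq]
    rw [← ε.forall_congr_right]
    simp [sysS, Sum.forall, Option.forall, and_assoc]
  have he : ∀ i, degS m (ε.symm i) ≠ 0 := by
    intro i
    generalize ε.symm i = o
    rcases o with (_ | i) | j <;> simp [degS]
    omega
  have hb : ∀ i, cofS (ε.symm i) = 1 ∨ (cofS (ε.symm i) = 0 ∧ degS m (ε.symm i) = 1) := by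
    intro i
    generalize ε.symm i = o
    rcases o with (_ | i) | j <;> simp [degS, cofS]
  have hh : ∀ i, (sysS c l (ε.symm i)).IsHomogeneous (degS m (ε.symm i)) :=
    fun i => sysS_hom c l hc _
  obtain ⟨hf, hcard⟩ := count_eq (fun i => sysS c l (ε.symm i)) _ _ hh (expl_hom _ _) hg
    (expl_good _ _ he hb)
  have := proj_count _ _ hh hg hf
  rw [hset]
  refine ⟨this.1, ?_⟩
  rw [this.2, hcard, expl_count _ _ he hb, ← prod_degS (q := q)]
  exact Equiv.prod_comp ε.symm (degS m)

lemma sys_dim {k q n m : ℕ} (hm : 1 ≤ m) (hn : k + q + 1 = n) (ε : Option (Fin k) ⊕ Fin q ≃ Fin n)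
    (c : Fin k → MvPolynomial (Fin (n + 1)) ℂ)
    (hc : ∀ i, (c i).IsHomogeneous (m + (i : ℕ))) (l : Fin q → Fin (n + 1) → ℂ)
    (hg : Good fun i => sysS c l (ε.symm i)) :
    algDim {x : Fin (n + 1) → ℂ | x 0 = 0 ∧ ∀ i, eval x (c i) = 0}
          = ((q + 1 : ℕ) : WithBot ℕ∞) := by
  have := dim_eq (σ := Fin (n + 1)) (ι := Option (Fin k)) (κ := Option (Fin q))
    (fun o => sysS c l (.inl o)) (fun o => degS (q := q) m (.inl o)) (fun o => sysS_hom c l hc _)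
    (by rintro (_ | i) <;> simp [degS]; omega)
    (fun o => o.elim (X (Fin.last n)) fun j => sysS c l (.inr j))
    (by
      rintro (_ | j)
      · exact isHomogeneous_X _ _
      · exact lin_hom _)
    (by
      intro x hx
      by_contra hne
      refine hg.last hne (fun i => ?_) (by simpa using hx (.inr none))
      rcases ε.symm i with o | j
      · exact hx (.inl o)
      · exact hx (.inr (some j)))
    (by simp; omega)
  simpa [Option.forall, sysS] using this

/-- Let `Y = {∑_{i=m}^{d} x₀^{d-i} fᵢ = 0} ⊆ ℙⁿ` with the `fᵢ` general
homogeneous forms of degree `i` in `x₁,…,xₙ`, so `y = [1:0:…:0]` is the only singularity,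
of multiplicity `m`. The variety `Σ` of lines in `Y` through `y`, viewed inside the
hyperplane `{x₀ = 0} ≅ ℙ^{n-1}`, equals the common zero locus of the `d − m + 1` forms
`f_m, …, f_d`; and if `d ≤ m + n − 2` then `Σ` is smooth (full-rank Jacobian at nonzero
points of the cone) of dimension `m + n − 2 − d` (cone dimension `m + n − 1 − d`) and of
degree `m(m+1)⋯d = d!/(m−1)!` (a general linear space of complementary dimension meets it
in that many points). -/
theorem stmt10 (n m d : ℕ) (hm : 1 ≤ m) (hmd : m ≤ d) (hn : 2 ≤ n) (hd : d ≤ m + n - 2) :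
    ∃ U : Set (Π _i : Fin (d + 1 - m),
        ((homogeneousSubmodule (Fin (n + 1)) ℂ (m + (_i : ℕ))) ⊓
          (Subalgebra.toSubmodule (supported ℂ {j : Fin (n + 1) | j ≠ 0})) :
            Submodule ℂ (MvPolynomial (Fin (n + 1)) ℂ))),
      IsZariskiOpen U ∧ U.Nonempty ∧
      ∀ c ∈ U,
        ({x : Fin (n + 1) → ℂ | x 0 = 0 ∧ ∀ u v : ℂ,
            eval (u • (Pi.single 0 1 : Fin (n + 1) → ℂ) + v • x)
              (∑ i : Fin (d + 1 - m),
                X 0 ^ (d - (m + (i : ℕ))) * ((c i : MvPolynomial (Fin (n + 1)) ℂ))) = 0}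
          = {x : Fin (n + 1) → ℂ | x 0 = 0 ∧
              ∀ i, eval x ((c i : MvPolynomial (Fin (n + 1)) ℂ)) = 0}) ∧
        (∀ x : Fin (n + 1) → ℂ, x ≠ 0 →
          x 0 = 0 → (∀ i, eval x ((c i : MvPolynomial (Fin (n + 1)) ℂ)) = 0) →
          Function.Surjective (Matrix.mulVecLin
            (fun (i : Option (Fin (d + 1 - m))) (j : Fin (n + 1)) =>
              Option.elim i (if j = 0 then (1 : ℂ) else 0)
                (fun i' => eval x (pderiv j ((c i' : MvPolynomial (Fin (n + 1)) ℂ))))))) ∧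
        algDim {x : Fin (n + 1) → ℂ | x 0 = 0 ∧
            ∀ i, eval x ((c i : MvPolynomial (Fin (n + 1)) ℂ)) = 0}
          = ((m + n - 1 - d : ℕ) : WithBot ℕ∞) ∧
        ∃ U' : Set (Fin (m + n - 2 - d) → (Fin (n + 1) → ℂ)),
          IsZariskiOpen U' ∧ U'.Nonempty ∧
          ∀ l ∈ U',
            ({p : Projectivization ℂ (Fin (n + 1) → ℂ) |
                p.rep 0 = 0 ∧ (∀ i, eval p.rep ((c i : MvPolynomial (Fin (n + 1)) ℂ)) = 0) ∧
                ∀ j, ∑ s, l j s * p.rep s = 0}).Finite ∧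
            ({p : Projectivization ℂ (Fin (n + 1) → ℂ) |
                p.rep 0 = 0 ∧ (∀ i, eval p.rep ((c i : MvPolynomial (Fin (n + 1)) ℂ)) = 0) ∧
                ∀ j, ∑ s, l j s * p.rep s = 0}).ncard
              = d.factorial / (m - 1).factorial := by
  classical
  set k := d + 1 - m with hk
  set q := m + n - 2 - d with hq
  have hkq : k + q + 1 = n := by omega
  have hdim : m + n - 1 - d = q + 1 := by omega
  rw [hdim, ← prod_fact hm hmd, ← hk]
  obtain ⟨ε, hε⟩ := exists_eps hkq
  set M := (Π _i : Fin k,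
        ((homogeneousSubmodule (Fin (n + 1)) ℂ (m + (_i : ℕ))) ⊓
          (Subalgebra.toSubmodule (supported ℂ {j : Fin (n + 1) | j ≠ 0})) :
            Submodule ℂ (MvPolynomial (Fin (n + 1)) ℂ))) with hM
  have hhom : ∀ (c : M) (i : Fin k), (c i : MvPolynomial (Fin (n + 1)) ℂ).IsHomogeneous (m + (i : ℕ)) :=
    fun c i => (c i).2.1
  have hsup : ∀ (c : M) (i : Fin k), (c i : MvPolynomial (Fin (n + 1)) ℂ) ∈
      supported ℂ {j : Fin (n + 1) | j ≠ 0} := fun c i => (c i).2.2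
  have hpf : ∀ i : Fin k, PFam fun c : M => (c i : MvPolynomial (Fin (n + 1)) ℂ) := fun i =>
    pf_coord (N := fun i : Fin k => (homogeneousSubmodule (Fin (n + 1)) ℂ (m + (i : ℕ))) ⊓
          (Subalgebra.toSubmodule (supported ℂ {j : Fin (n + 1) | j ≠ 0}))) i
  obtain ⟨a, ha⟩ := ferm_smooth (n := n) (fun i : Fin k => m + (i : ℕ))
  let c1 : M := fun i => ⟨ferm (fun i : Fin k => m + (i : ℕ)) a i, ferm_mem _ _ _⟩
  let c2 : M := fun i => ⟨cst m ε i, cst_mem ε hε i⟩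
  obtain ⟨P1, hP1, hP1a, hP1g⟩ := smsys_elim (fun (c : M) i => (c i : MvPolynomial (Fin (n + 1)) ℂ))
    (fun i => m + (i : ℕ)) hhom hpf c1 ha
  have hg0 : Good fun i => sysS (cst m ε) (lst ε) (ε.symm i) := by
    have : (fun i => sysS (cst m ε) (lst ε) (ε.symm i)) = expl (fun i => degS m (ε.symm i))
        (fun i => cofS (ε.symm i)) := funext fun i => sys_expl ε hε i
    rw [this]
    apply expl_good
    · intro i
      generalize ε.symm i = o
      rcases o with (_ | i) | j <;> simp [degS]
      omega
    · intro i
      generalize ε.symm i = o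
      rcases o with (_ | i) | j <;> simp [degS, cofS]
  obtain ⟨P2, hP2, hP2a, hP2g⟩ := good_elim
    (fun (c : M) i => sysS (fun i => (c i : MvPolynomial (Fin (n + 1)) ℂ)) (lst ε) (ε.symm i))
    (fun i => degS m (ε.symm i)) (fun c i => sysS_hom _ _ (hhom c) _)
    (by
      intro i
      generalize ε.symm i = o
      rcases o with (_ | i) | j
      · exact pf_const _
      · exact hpf i
      · exact pf_const _) c2 hg0
  refine ⟨{c | P1 c * P2 c ≠ 0}, ipf_open (ipf_mul hP1 hP2), ipf_inter hP1 hP2 hP1a hP2a, ?_⟩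
  intro c hcU
  have hc1 := hP1g c (left_ne_zero_of_mul hcU)
  have hc2 := hP2g c (right_ne_zero_of_mul hcU)
  refine ⟨lines_eq _ (hhom c) (hsup c), (smsys_iff _).1 hc1,
    sys_dim hm hkq ε _ (hhom c) _ hc2, ?_⟩
  obtain ⟨Q, hQ, hQa, hQg⟩ := good_elim
    (fun (l : Fin q → Fin (n + 1) → ℂ) i =>
      sysS (fun i => (c i : MvPolynomial (Fin (n + 1)) ℂ)) l (ε.symm i))
    (fun i => degS m (ε.symm i)) (fun l i => sysS_hom _ _ (hhom c) _)
    (by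
      intro i
      generalize ε.symm i = o
      rcases o with (_ | i) | j
      · exact pf_const _
      · exact pf_const _
      · refine pf_sum _ fun s _ => pf_mul ?_ (pf_const _)
        intro t
        simp only [coeff_C]
        split_ifs
        · exact ipf_lin ((LinearMap.proj (R := ℂ) (φ := fun _ : Fin (n + 1) => ℂ) s) ∘ₗ
            (LinearMap.proj (R := ℂ) (φ := fun _ : Fin q => Fin (n + 1) → ℂ) j))
        · exact ipf_const 0) (lst ε) hc2
  refine ⟨{l | Q l ≠ 0}, ipf_open hQ, ⟨lst ε, hQa⟩, ?_⟩
  intro l hl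
  exact sys_count hm ε _ (hhom c) l (hQg l hl)
end
end

section
/- Let Y ⊂ ℙⁿ be a hypersurface of degree d with a unique singular point y of multiplicity m, general among such pairs, and suppose d = m + n − 2. Then the set of lines in Y through y is finite, of cardinality exactly d!/(m−1)!. -/
open MvPolynomial

noncomputable section

/-! polynomial functions -/
theorem isPolyFun_iff {M : Type*} [AddCommGroup M] [Module ℂ M] (g : M → ℂ) :
    IsPolynomialFun g ↔ ∃ p : MvPolynomial (M →ₗ[ℂ] ℂ) ℂ, ∀ m, g m = eval (fun l => l m) p := by
  constructor
  · rintro ⟨k, l, p, h⟩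
    refine ⟨rename l p, fun m => ?_⟩
    rw [h, eval_rename]; rfl
  · rintro ⟨p, h⟩
    obtain ⟨k, f, hf, q, rfl⟩ := exists_fin_rename p
    refine ⟨k, f, q, fun m => ?_⟩
    rw [h, eval_rename]; rfl

namespace IsPolynomialFun
variable {M : Type*} [AddCommGroup M] [Module ℂ M]

theorem const (a : ℂ) : IsPolynomialFun (fun _ : M => a) :=
  (isPolyFun_iff _).2 ⟨C a, by simp⟩

theorem linear (l : M →ₗ[ℂ] ℂ) : IsPolynomialFun (fun m : M => l m) :=
  (isPolyFun_iff _).2 ⟨X l, by simp⟩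

theorem add {f g : M → ℂ} (hf : IsPolynomialFun f) (hg : IsPolynomialFun g) :
    IsPolynomialFun (fun m => f m + g m) := by
  obtain ⟨p, hp⟩ := (isPolyFun_iff _).1 hf
  obtain ⟨q, hq⟩ := (isPolyFun_iff _).1 hg
  exact (isPolyFun_iff _).2 ⟨p + q, by simp [hp, hq]⟩

theorem mul {f g : M → ℂ} (hf : IsPolynomialFun f) (hg : IsPolynomialFun g) :
    IsPolynomialFun (fun m => f m * g m) := by
  obtain ⟨p, hp⟩ := (isPolyFun_iff _).1 hf
  obtain ⟨q, hq⟩ := (isPolyFun_iff _).1 hg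
  exact (isPolyFun_iff _).2 ⟨p * q, by simp [hp, hq]⟩

theorem sum {ι : Type*} (s : Finset ι) {f : ι → M → ℂ} (hf : ∀ i ∈ s, IsPolynomialFun (f i)) :
    IsPolynomialFun (fun m => ∑ i ∈ s, f i m) := by
  classical
  induction s using Finset.induction_on with
  | empty => simpa using const 0
  | insert a s ha ih =>
    simp only [Finset.sum_insert ha]
    exact add (hf a (by simp)) (ih fun i hi => hf i (by simp [hi]))

theorem prod {ι : Type*} (s : Finset ι) {f : ι → M → ℂ} (hf : ∀ i ∈ s, IsPolynomialFun (f i)) :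
    IsPolynomialFun (fun m => ∏ i ∈ s, f i m) := by
  classical
  induction s using Finset.induction_on with
  | empty => simpa using const 1
  | insert a s ha ih =>
    simp only [Finset.prod_insert ha]
    exact mul (hf a (by simp)) (ih fun i hi => hf i (by simp [hi]))

theorem det {ι : Type*} [Fintype ι] [DecidableEq ι] {A : M → Matrix ι ι ℂ}
    (hA : ∀ i j, IsPolynomialFun (fun m => A m i j)) :
    IsPolynomialFun (fun m => (A m).det) := by
  simp only [Matrix.det_apply']
  exact sum _ fun σ _ => mul (const _) (prod _ fun i _ => hA _ _)

/-- restriction to a line -/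
theorem line {g : M → ℂ} (hg : IsPolynomialFun g) (a b : M) :
    ∃ q : Polynomial ℂ, ∀ t : ℂ, q.eval t = g (a + t • b) := by
  obtain ⟨p, hp⟩ := (isPolyFun_iff _).1 hg
  refine ⟨aeval (fun l : M →ₗ[ℂ] ℂ => Polynomial.C (l a) + Polynomial.X * Polynomial.C (l b)) p,
    fun t => ?_⟩
  rw [hp, ← Polynomial.coe_evalRingHom, ← coe_aeval_eq_eval]
  change _ = aeval _ p
  rw [← Polynomial.coe_aeval_eq_evalRingHom]
  change (Polynomial.aeval t) _ = _
  rw [MvPolynomial.comp_aeval_apply]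
  congr 2
  ext l
  simp
  ring
end IsPolynomialFun

/-- families of polynomials whose coefficients are polynomial functions -/
def PolyFam {M : Type*} [AddCommGroup M] [Module ℂ M] {σ : Type*}
    (q : M → MvPolynomial σ ℂ) : Prop := ∀ b, IsPolynomialFun (fun c => coeff b (q c))

namespace PolyFam
variable {M : Type*} [AddCommGroup M] [Module ℂ M] {σ : Type*}

theorem const (p : MvPolynomial σ ℂ) : PolyFam (fun _ : M => p) := fun _ => .const _

theorem linear (l : M →ₗ[ℂ] MvPolynomial σ ℂ) : PolyFam (fun m : M => l m) :=
  fun b => .linear ((lcoeff ℂ b).comp l)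

theorem add {f g : M → MvPolynomial σ ℂ} (hf : PolyFam f) (hg : PolyFam g) :
    PolyFam (fun m => f m + g m) := fun b => by
  simpa using (hf b).add (hg b)

theorem mul {f g : M → MvPolynomial σ ℂ} (hf : PolyFam f) (hg : PolyFam g) :
    PolyFam (fun m => f m * g m) := fun b => by
  classical
  simp only [coeff_mul]
  exact .sum _ fun x _ => (hf _).mul (hg _)

theorem sum {ι : Type*} (s : Finset ι) {f : ι → M → MvPolynomial σ ℂ}
    (hf : ∀ i ∈ s, PolyFam (f i)) : PolyFam (fun m => ∑ i ∈ s, f i m) := fun b => by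
  simp only [coeff_sum]
  exact .sum _ fun i hi => hf i hi b

theorem prod {ι : Type*} (s : Finset ι) {f : ι → M → MvPolynomial σ ℂ}
    (hf : ∀ i ∈ s, PolyFam (f i)) : PolyFam (fun m => ∏ i ∈ s, f i m) := by
  classical
  induction s using Finset.induction_on with
  | empty => simpa using const 1
  | insert a s ha ih =>
    simp only [Finset.prod_insert ha]
    exact mul (hf a (by simp)) (ih fun i hi => hf i (by simp [hi]))

theorem det {ι : Type*} [Fintype ι] [DecidableEq ι] {A : M → Matrix ι ι (MvPolynomial σ ℂ)}
    (hA : ∀ i j, PolyFam (fun m => A m i j)) : PolyFam (fun m => (A m).det) := by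
  simp only [Matrix.det_apply']
  exact sum _ fun σ _ => mul (const _) (prod _ fun i _ => hA _ _)
end PolyFam

/-- Openness of "only the trivial common zero". -/
theorem resultant_exists {M : Type*} [AddCommGroup M] [Module ℂ M] {σ ι : Type*}
    [Fintype σ] [Fintype ι] (F : ι → M → MvPolynomial σ ℂ) (e : ι → ℕ)
    (hF : ∀ i, PolyFam (F i)) (hh : ∀ i c, (F i c).IsHomogeneous (e i)) (c0 : M)
    (h0 : ∀ v, (∀ i, eval v (F i c0) = 0) → v = 0) :
    ∃ g : M → ℂ, IsPolynomialFun g ∧ g c0 ≠ 0 ∧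
      ∀ c, g c ≠ 0 → ∀ v, (∀ i, eval v (F i c) = 0) → v = 0 := by
  classical
  let _ := MvPolynomial.gradedAlgebra (σ := σ) (R := ℂ)
  set I : Ideal (MvPolynomial σ ℂ) := Ideal.span (Set.range fun i => F i c0) with hI
  -- Nullstellensatz
  have h1 : ∀ j : σ, ∃ k : ℕ, (X j : MvPolynomial σ ℂ) ^ k ∈ I := by
    intro j
    have : (X j : MvPolynomial σ ℂ) ∈ I.radical := by
      rw [← vanishingIdeal_zeroLocus_eq_radical (K := ℂ), mem_vanishingIdeal_iff]
      intro x hx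
      have : x = 0 := h0 x fun i => by
        have := hx (F i c0) (Ideal.subset_span ⟨i, rfl⟩)
        simpa [coe_aeval_eq_eval] using this
      simp [this]
    exact this
  choose k hk using h1
  set D := ∑ j, k j + 1 with hD
  have h2 : ∀ b : σ →₀ ℕ, b.degree = D → monomial b (1 : ℂ) ∈ I := by
    intro b hb
    obtain ⟨j, hj⟩ : ∃ j, k j ≤ b j := by
      by_contra! hcon
      have : b.degree ≤ ∑ j, k j := by
        rw [Finsupp.degree_eq_sum]
        exact Finset.sum_le_sum fun j _ => (hcon j).le
      omega
    have : monomial b (1 : ℂ) = monomial (b - Finsupp.single j (k j)) 1 * X j ^ k j := by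
      rw [X_pow_eq_monomial, monomial_mul, one_mul, tsub_add_cancel_of_le]
      simpa using hj
    rw [this]
    exact I.mul_mem_left _ (hk j)
  have hfin : {b : σ →₀ ℕ | b.degree = D}.Finite := by
    exact Finsupp.finite_of_degree_le D |>.subset fun b hb => le_of_eq hb
  have : Fintype {b : σ →₀ ℕ // b.degree = D} := hfin.fintype
  have h3 : ∀ b : {b : σ →₀ ℕ // b.degree = D}, ∃ h : ι → MvPolynomial σ ℂ,
      ∑ i, h i * F i c0 = monomial b.1 1 := by
    intro b
    exact (Ideal.mem_span_range_iff_exists_fun).1 (h2 b.1 b.2)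
  choose h hh3 using h3
  let A : M → Matrix {b : σ →₀ ℕ // b.degree = D} {b : σ →₀ ℕ // b.degree = D} ℂ :=
    fun c => Matrix.of fun b b' => coeff b'.1 (∑ i, h b i * F i c)
  refine ⟨fun c => (A c).det, ?_, ?_, ?_⟩
  · refine .det fun b b' => ?_
    exact PolyFam.sum _ (fun i _ => (PolyFam.const _).mul (hF i)) b'.1
  · have : A c0 = 1 := by
      ext b b'
      simp only [A, Matrix.of_apply, hh3, coeff_monomial, Matrix.one_apply, Subtype.ext_iff]
    simp [this]
  · intro c hc v hv
    have key : (A c).mulVec (fun b => ∏ j, v j ^ b.1 j) = 0 := by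
      ext b
      set P := ∑ i, h b i * F i c with hP
      let K : Ideal (MvPolynomial σ ℂ) := Ideal.span (Set.range fun i => F i c)
      have hK : K.IsHomogeneous (homogeneousSubmodule σ ℂ) := by
        apply Ideal.homogeneous_span
        rintro _ ⟨i, rfl⟩
        exact ⟨e i, hh i c⟩
      have hPK : P ∈ K := by
        refine K.sum_mem fun i _ => K.mul_mem_left _ (Ideal.subset_span ⟨i, rfl⟩)
      have hPD := homogeneousComponent_mem_of_mem hK hPK D
      have hz : ∀ q ∈ K, eval v q = 0 := by
        have : K ≤ RingHom.ker (eval v) := by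
          rw [Ideal.span_le]
          rintro _ ⟨i, rfl⟩
          exact hv i
        exact fun q hq => this hq
      have h4 := hz _ hPD
      rw [eval_eq'] at h4
      simp only [Pi.zero_apply, Matrix.mulVec, dotProduct, A, Matrix.of_apply]
      rw [← h4]
      rw [← hP]
      rw [← Finset.sum_subtype (p := fun b : σ →₀ ℕ => b.degree = D) hfin.toFinset (by simp)
        (fun b' => coeff b' P * ∏ j, v j ^ b' j)]
      symm
      apply Finset.sum_subset_zero_on_sdiff
      · intro x hx
        by_contra hne
        simp [mem_support_iff, coeff_homogeneousComponent] at hx hne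
        exact hne hx.1
      · intro x hx
        simp at hx
        have := hx.2
        rw [coeff_homogeneousComponent, if_pos hx.1] at this
        simp [this]
      · intro x hx
        have : x.degree = D := by
          by_contra hne
          simp [mem_support_iff, coeff_homogeneousComponent] at hx hne
          exact hne hx.1
        rw [coeff_homogeneousComponent, if_pos this]
    have h5 := Matrix.eq_zero_of_mulVec_eq_zero hc key
    ext j
    have := congrFun h5 ⟨Finsupp.single j D, by simp⟩
    simp only [Pi.zero_apply, Finset.prod_eq_zero_iff] at this
    obtain ⟨i, _, hi⟩ := this
    by_cases hij : j = i
    · subst hij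
      exact eq_zero_of_pow_eq_zero hi
    · simp [hij] at hi

open Filter Topology in
theorem local_count {X P : Type*} [TopologicalSpace X] [T2Space X] [TopologicalSpace P]
    (Z : P → Set X) (t0 : P) (hfin : (Z t0).Finite)
    (h1 : ∀ x ∈ Z t0, ∀ N ∈ 𝓝 x, ∀ᶠ t in 𝓝 t0, ∃ y ∈ N, y ∈ Z t)
    (h2 : ∀ x ∈ Z t0, ∃ N ∈ 𝓝 x, ∀ᶠ t in 𝓝 t0, (N ∩ Z t).Subsingleton)
    (h3 : ∀ O, IsOpen O → Z t0 ⊆ O → ∀ᶠ t in 𝓝 t0, Z t ⊆ O) :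
    ∀ᶠ t in 𝓝 t0, (Z t).ncard = (Z t0).ncard := by
  classical
  obtain ⟨V, hV, hdisj⟩ := hfin.t2_separation
  choose! N hN hN' using h2
  let O : X → Set X := fun x => V x ∩ interior (N x)
  have hO : ∀ x, IsOpen (O x) := fun x => (hV x).2.inter isOpen_interior
  have hxO : ∀ x ∈ Z t0, x ∈ O x := fun x hx => ⟨(hV x).1, mem_interior_iff_mem_nhds.2 (hN x hx)⟩
  have e1 : ∀ᶠ t in 𝓝 t0, ∀ x ∈ Z t0, ∃ y ∈ O x, y ∈ Z t :=
    (hfin.eventually_all).2 fun x hx => h1 x hx _ ((hO x).mem_nhds (hxO x hx))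
  have e2 : ∀ᶠ t in 𝓝 t0, ∀ x ∈ Z t0, (N x ∩ Z t).Subsingleton :=
    (hfin.eventually_all).2 fun x hx => hN' x hx
  have e3 := h3 (⋃ x ∈ Z t0, O x) (isOpen_biUnion fun x _ => hO x)
    (fun x hx => Set.mem_biUnion hx (hxO x hx))
  filter_upwards [e1, e2, e3] with t a1 a2 a3
  choose! y hy hyZ using a1
  symm
  refine Set.ncard_congr (fun x _ => y x) (fun x hx => hyZ x hx) ?_ ?_
  · intro a b ha hb hab
    by_contra hne
    have := hdisj ha hb hne
    refine Set.disjoint_left.1 this (hy a ha).1 ?_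
    have hab' : y a = y b := hab
    rw [hab']
    exact (hy b hb).1
  · intro z hz
    obtain ⟨x, hx, hzx⟩ := Set.mem_iUnion₂.1 (a3 hz)
    exact ⟨x, hx, a2 x hx ⟨interior_subset (hy x hx).2, hyZ x hx⟩ ⟨interior_subset hzx.2, hz⟩⟩

theorem hasStrictFDerivAt_mvpoly {σ : Type*} [Fintype σ] (p : MvPolynomial σ ℂ) (v : σ → ℂ) :
    HasStrictFDerivAt (fun v : σ → ℂ => eval v p)
      (∑ j, (eval v (pderiv j p)) • (ContinuousLinearMap.proj j : (σ → ℂ) →L[ℂ] ℂ)) v := by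
  classical
  induction p using MvPolynomial.induction_on with
  | C a =>
    have h := hasStrictFDerivAt_const (𝕜 := ℂ) a v
    simp only [eval_C]
    refine h.congr_fderiv ?_
    ext w
    simp
  | add p q hp hq =>
    have h := hp.add hq
    simp only [map_add]
    refine h.congr_fderiv ?_
    ext w
    simp [add_mul, Finset.sum_add_distrib]
  | mul_X p i hp =>
    have h := hp.mul (hasStrictFDerivAt_apply (𝕜 := ℂ) i v)
    simp only [map_mul, eval_X]
    refine h.congr_fderiv ?_
    ext w
    simp [pderiv_X, Pi.single_apply, add_mul, Finset.sum_add_distrib, Finset.mul_sum, apply_ite]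
    ring_nf

/-- affine common zeros -/
def ZZ {r : ℕ} (f : Fin r → MvPolynomial (Fin (r + 1)) ℂ) : Set (Fin r → ℂ) :=
  {x | ∀ i, eval (Fin.snoc (α := fun _ => ℂ) x 1) (f i) = 0}

def Nondeg {r : ℕ} (f : Fin r → MvPolynomial (Fin (r + 1)) ℂ) : Prop :=
  ∀ v : Fin (r + 1) → ℂ, v ≠ 0 → (∀ i, eval v (f i) = 0) → v (Fin.last r) ≠ 0 ∧
    (Matrix.of fun i j => eval v (pderiv (Fin.castSucc j) (f i))).det ≠ 0

theorem homog_eval_smul {σ : Type*} [Fintype σ] {p : MvPolynomial σ ℂ} {n : ℕ}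
    (hp : p.IsHomogeneous n) (a : ℂ) (v : σ → ℂ) : eval (a • v) p = a ^ n * eval v p := by
  rw [eval_eq', eval_eq', Finset.mul_sum]
  refine Finset.sum_congr rfl fun b hb => ?_
  have : ∑ i, b i = n := by
    rw [← Finsupp.degree_eq_sum]
    by_contra h
    exact (mem_support_iff.1 hb) (hp.coeff_eq_zero h)
  simp only [Pi.smul_apply, smul_eq_mul, mul_pow, Finset.prod_mul_distrib,
    Finset.prod_pow_eq_pow_sum, this]
  ring

def snocL (r : ℕ) : (Fin r → ℂ) →ₗ[ℂ] (Fin (r + 1) → ℂ) where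
  toFun w := Fin.snoc (α := fun _ => ℂ) w 0
  map_add' x y := by
    ext i; refine Fin.lastCases ?_ (fun j => ?_) i <;> simp
  map_smul' a x := by
    ext i; refine Fin.lastCases ?_ (fun j => ?_) i <;> simp

theorem hasStrictFDerivAt_snoc {r : ℕ} (x : Fin r → ℂ) :
    HasStrictFDerivAt (fun x : Fin r → ℂ => (Fin.snoc (α := fun _ => ℂ) x 1 : Fin (r + 1) → ℂ))
      (LinearMap.toContinuousLinearMap (snocL r)) x := by
  have h := (LinearMap.toContinuousLinearMap (snocL r)).hasStrictFDerivAt (x := x)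
  have h2 := h.add_const (Pi.single (Fin.last r) (1 : ℂ) : Fin (r + 1) → ℂ)
  convert! h2 using 1
  funext y i
  refine Fin.lastCases ?_ (fun j => ?_) i <;> simp [snocL]

def GG {r : ℕ} (f0 f1 : Fin r → MvPolynomial (Fin (r + 1)) ℂ) (z : ℂ × (Fin r → ℂ)) :
    ℂ × (Fin r → ℂ) :=
  (z.1, fun i => eval (Fin.snoc (α := fun _ => ℂ) z.2 1) (f0 i + z.1 • f1 i))

theorem GG_deriv {r : ℕ} (f0 f1 : Fin r → MvPolynomial (Fin (r + 1)) ℂ) (t0 : ℂ) (x : Fin r → ℂ)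
    (hdet : (Matrix.of fun i j => eval (Fin.snoc (α := fun _ => ℂ) x 1)
      (pderiv (Fin.castSucc j) (f0 i + t0 • f1 i))).det ≠ 0) :
    ∃ L : (ℂ × (Fin r → ℂ)) ≃L[ℂ] (ℂ × (Fin r → ℂ)),
      HasStrictFDerivAt (GG f0 f1) (L : (ℂ × (Fin r → ℂ)) →L[ℂ] (ℂ × (Fin r → ℂ))) (t0, x) := by
  set u : Fin (r + 1) → ℂ := Fin.snoc (α := fun _ => ℂ) x 1 with hu
  have hev : ∀ p : MvPolynomial (Fin (r + 1)) ℂ,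
      HasStrictFDerivAt (fun z : ℂ × (Fin r → ℂ) => eval (Fin.snoc (α := fun _ => ℂ) z.2 1) p)
        (((∑ j, (eval u (pderiv j p)) • (ContinuousLinearMap.proj j : (Fin (r + 1) → ℂ) →L[ℂ] ℂ)).comp
          (LinearMap.toContinuousLinearMap (snocL r))).comp
          (ContinuousLinearMap.snd ℂ ℂ (Fin r → ℂ))) (t0, x) := by
    intro p
    have h1 : HasStrictFDerivAt (𝕜 := ℂ) (fun z : ℂ × (Fin r → ℂ) => z.2) _ (t0, x) :=
      hasStrictFDerivAt_snd
    have h2 := (hasStrictFDerivAt_snoc x)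
    have h3 := hasStrictFDerivAt_mvpoly p u
    have h4 := HasStrictFDerivAt.comp x h3 h2
    exact HasStrictFDerivAt.comp (t0, x) h4 h1
  have hcomp : ∀ i, ∃ L : (ℂ × (Fin r → ℂ)) →L[ℂ] ℂ,
      HasStrictFDerivAt (fun z : ℂ × (Fin r → ℂ) =>
        eval (Fin.snoc (α := fun _ => ℂ) z.2 1) (f0 i + z.1 • f1 i)) L (t0, x) ∧
      ∀ w, L (0, w) = ∑ j, eval u (pderiv (Fin.castSucc j) (f0 i + t0 • f1 i)) * w j := by
    intro i
    have h1 : HasStrictFDerivAt (𝕜 := ℂ) (fun z : ℂ × (Fin r → ℂ) => z.1) _ (t0, x) :=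
      hasStrictFDerivAt_fst
    have h := (hev (f0 i)).add (h1.mul (hev (f1 i)))
    refine ⟨_, HasStrictFDerivAt.congr_of_eventuallyEq h (Filter.Eventually.of_forall fun z => ?_), fun w => ?_⟩
    · simp [smul_eval]
    · simp [smul_eval, Fin.sum_univ_castSucc, snocL, add_mul, Finset.sum_add_distrib,
        Finset.mul_sum, mul_assoc]
  choose L hL hL' using hcomp
  have hfull : HasStrictFDerivAt (GG f0 f1)
      ((ContinuousLinearMap.fst ℂ ℂ (Fin r → ℂ)).prod (ContinuousLinearMap.pi L)) (t0, x) := by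
    refine HasStrictFDerivAt.prodMk hasStrictFDerivAt_fst ?_
    exact hasStrictFDerivAt_pi.2 hL
  set Q := (ContinuousLinearMap.fst ℂ ℂ (Fin r → ℂ)).prod (ContinuousLinearMap.pi L) with hQ
  have hinj : Function.Injective (Q : (ℂ × (Fin r → ℂ)) →ₗ[ℂ] (ℂ × (Fin r → ℂ))) := by
    rw [← LinearMap.ker_eq_bot, LinearMap.ker_eq_bot']
    rintro ⟨τ, w⟩ h
    have ha : τ = 0 := congrArg Prod.fst h
    subst ha
    have hb : ∀ i, L i (0, w) = 0 := fun i => congrFun (congrArg Prod.snd h) i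
    have : w = 0 := by
      refine Matrix.eq_zero_of_mulVec_eq_zero hdet ?_
      ext i
      have := hb i
      rw [hL'] at this
      simpa [Matrix.mulVec, dotProduct] using this
    simp [this]
  refine ⟨(LinearEquiv.ofInjectiveEndo _ hinj).toContinuousLinearEquiv, ?_⟩
  convert! hfull using 1

open Filter Topology in
theorem zz_local {r : ℕ} (f0 f1 : Fin r → MvPolynomial (Fin (r + 1)) ℂ) (δ : Fin r → ℕ)
    (h0 : ∀ i, (f0 i).IsHomogeneous (δ i)) (h1 : ∀ i, (f1 i).IsHomogeneous (δ i)) (t0 : ℂ)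
    (hnd : Nondeg fun i => f0 i + t0 • f1 i) :
    (ZZ fun i => f0 i + t0 • f1 i).Finite ∧
    ∀ᶠ t in 𝓝 t0, (ZZ fun i => f0 i + t • f1 i).ncard = (ZZ fun i => f0 i + t0 • f1 i).ncard := by
  have hhom : ∀ t i, (f0 i + t • f1 i).IsHomogeneous (δ i) := fun t i =>
    (h0 i).add ((homogeneousSubmodule _ _ _).smul_mem t (h1 i))
  have hne : ∀ x : Fin r → ℂ, (Fin.snoc (α := fun _ => ℂ) x 1 : Fin (r + 1) → ℂ) ≠ 0 := by
    intro x h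
    simpa using congrFun h (Fin.last r)
  have hL : ∀ x ∈ ZZ (fun i => f0 i + t0 • f1 i),
      ∃ L : (ℂ × (Fin r → ℂ)) ≃L[ℂ] (ℂ × (Fin r → ℂ)),
        HasStrictFDerivAt (GG f0 f1) (L : (ℂ × (Fin r → ℂ)) →L[ℂ] (ℂ × (Fin r → ℂ))) (t0, x) :=
    fun x hx => GG_deriv f0 f1 t0 x (hnd _ (hne x) hx).2
  have H1 : ∀ x ∈ ZZ (fun i => f0 i + t0 • f1 i), ∀ N ∈ 𝓝 x,
      ∀ᶠ t in 𝓝 t0, ∃ y ∈ N, y ∈ ZZ (fun i => f0 i + t • f1 i) := by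
    intro x hx N hN
    obtain ⟨L, hL⟩ := hL x hx
    have hm := hL.map_nhds_eq_of_equiv
    have hG0 : GG f0 f1 (t0, x) = (t0, 0) := by
      refine Prod.ext rfl ?_
      funext i
      exact hx i
    rw [hG0] at hm
    have himg : GG f0 f1 '' (Set.univ ×ˢ N) ∈ 𝓝 ((t0, 0) : ℂ × (Fin r → ℂ)) := by
      rw [← hm]
      exact image_mem_map (prod_mem_nhds univ_mem hN)
    have hc : ContinuousAt (fun t : ℂ => ((t, 0) : ℂ × (Fin r → ℂ))) t0 := by fun_prop
    filter_upwards [hc himg] with t ht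
    obtain ⟨⟨s, y⟩, ⟨_, hy⟩, hs⟩ := ht
    have hst : s = t := congrArg Prod.fst hs
    subst hst
    exact ⟨y, hy, fun i => congrFun (congrArg Prod.snd hs) i⟩
  have H2 : ∀ x ∈ ZZ (fun i => f0 i + t0 • f1 i), ∃ N ∈ 𝓝 x,
      ∀ᶠ t in 𝓝 t0, (N ∩ ZZ (fun i => f0 i + t • f1 i)).Subsingleton := by
    intro x hx
    obtain ⟨L, hL⟩ := hL x hx
    have hs : (hL.toOpenPartialHomeomorph (GG f0 f1)).source ∈ 𝓝 (t0, x) :=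
      (hL.toOpenPartialHomeomorph (GG f0 f1)).open_source.mem_nhds
        hL.mem_toOpenPartialHomeomorph_source
    obtain ⟨A, hA, N, hN, hAN⟩ := mem_nhds_prod_iff.1 hs
    refine ⟨N, hN, ?_⟩
    filter_upwards [hA] with t ht
    rintro a ⟨ha, ha'⟩ b ⟨hb, hb'⟩
    have := (hL.toOpenPartialHomeomorph (GG f0 f1)).injOn (hAN ⟨ht, ha⟩ : (t, a) ∈ _)
      (hAN ⟨ht, hb⟩ : (t, b) ∈ _) (by
        change GG f0 f1 _ = GG f0 f1 _
        refine Prod.ext rfl ?_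
        funext i
        exact (ha' i).trans (hb' i).symm)
    exact congrArg Prod.snd this
  have hcont : ∀ i, Continuous fun z : ℂ × (Fin (r + 1) → ℂ) => eval z.2 (f0 i + z.1 • f1 i) := by
    intro i
    simp only [map_add, smul_eval]
    have a0 := (f0 i).continuous_eval
    have a1 := (f1 i).continuous_eval
    fun_prop
  let π : (Fin (r + 1) → ℂ) → (Fin r → ℂ) := fun v i => v (Fin.castSucc i) / v (Fin.last r)
  have hπ : ∀ v, v (Fin.last r) ≠ 0 → ContinuousAt π v := by
    intro v hv
    refine continuousAt_pi.2 fun i => ?_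
    exact ContinuousAt.div (continuous_apply (Fin.castSucc i)).continuousAt
      (continuous_apply (Fin.last r)).continuousAt hv
  have hπs : ∀ v, v (Fin.last r) ≠ 0 →
      (Fin.snoc (α := fun _ => ℂ) (π v) 1 : Fin (r + 1) → ℂ) = (v (Fin.last r))⁻¹ • v := by
    intro v hv
    funext i
    refine Fin.lastCases ?_ (fun j => ?_) i
    · simp [hv]
    · simp [π, div_eq_inv_mul]
  have hπZ : ∀ (t : ℂ) (v : Fin (r + 1) → ℂ), v (Fin.last r) ≠ 0 → (∀ i, eval v (f0 i + t • f1 i) = 0) →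
      π v ∈ ZZ (fun i => f0 i + t • f1 i) := by
    intro t v hv hz i
    rw [hπs v hv, homog_eval_smul (hhom t i), hz, mul_zero]
  have hback : ∀ x : Fin r → ℂ, ∃ u ∈ Metric.sphere (0 : Fin (r + 1) → ℂ) 1, π u = x ∧
      u (Fin.last r) ≠ 0 ∧ ∀ t : ℂ, x ∈ ZZ (fun i => f0 i + t • f1 i) →
      ∀ i, eval u (f0 i + t • f1 i) = 0 := by
    intro x
    set w : Fin (r + 1) → ℂ := Fin.snoc (α := fun _ => ℂ) x 1 with hw
    have hnz : ‖w‖ ≠ 0 := norm_ne_zero_iff.2 (hne x)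
    refine ⟨((‖w‖⁻¹ : ℝ) : ℂ) • w, ?_, ?_, ?_, ?_⟩
    · simp [norm_smul, hnz]
    · funext i
      have h1 : ((‖w‖⁻¹ : ℝ) : ℂ) ≠ 0 := by exact_mod_cast inv_ne_zero hnz
      have h2 : w (Fin.castSucc i) = x i := by simp [hw]
      have h3 : w (Fin.last r) = 1 := by simp [hw]
      simp only [π, Pi.smul_apply, smul_eq_mul, h2, h3]
      rw [mul_one, mul_div_cancel_left₀ _ h1]
    · simpa [hw] using hne x
    · intro t hx i
      rw [homog_eval_smul (hhom t i)]
      rw [hx i, mul_zero]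
  have hK : IsCompact (Metric.sphere (0 : Fin (r + 1) → ℂ) 1) := isCompact_sphere _ _
  have hKne : ∀ v ∈ Metric.sphere (0 : Fin (r + 1) → ℂ) 1, v ≠ 0 := by
    rintro v hv rfl
    simp at hv
  have H3 : ∀ O, IsOpen O → ZZ (fun i => f0 i + t0 • f1 i) ⊆ O →
      ∀ᶠ t in 𝓝 t0, ZZ (fun i => f0 i + t • f1 i) ⊆ O := by
    intro O hO hsub
    have := hK.eventually_forall_of_forall_eventually (x₀ := t0)
      (P := fun t v => (∀ i, eval v (f0 i + t • f1 i) = 0) → π v ∈ O) (by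
        intro v hv
        by_cases hz : ∀ i, eval v (f0 i + t0 • f1 i) = 0
        · have hl := (hnd v (hKne v hv) hz).1
          have hmem : π v ∈ O := hsub (hπZ t0 v hl hz)
          have : ContinuousAt (fun z : ℂ × (Fin (r + 1) → ℂ) => π z.2) (t0, v) :=
            ContinuousAt.comp (g := π) (f := Prod.snd) (hπ v hl) continuousAt_snd
          filter_upwards [this (hO.mem_nhds hmem)] with z hz _ using hz
        · push Not at hz
          obtain ⟨i, hi⟩ := hz
          filter_upwards [(hcont i).continuousAt.eventually_ne hi] with z hz hz'
          exact absurd (hz' i) hz)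
    filter_upwards [this] with t ht x hx
    obtain ⟨u, hu, hux, -, huz⟩ := hback x
    rw [← hux]
    exact ht u hu (huz t hx)
  have hfin : (ZZ fun i => f0 i + t0 • f1 i).Finite := by
    have hcomp : IsCompact (ZZ fun i => f0 i + t0 • f1 i) := by
      have hC : IsCompact (Metric.sphere (0 : Fin (r + 1) → ℂ) 1 ∩
          {v | ∀ i, eval v (f0 i + t0 • f1 i) = 0}) := by
        refine hK.inter_right ?_
        simp only [Set.ofPred_forall]
        exact isClosed_iInter fun i => isClosed_eq
          ((f0 i + t0 • f1 i).continuous_eval) continuous_const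
      have := hC.image_of_continuousOn (f := π) (fun v hv =>
        (hπ v (hnd v (hKne v hv.1) hv.2).1).continuousWithinAt)
      convert! this using 1
      ext x
      constructor
      · intro hx
        obtain ⟨u, hu, hux, -, huz⟩ := hback x
        exact ⟨u, ⟨hu, huz t0 hx⟩, hux⟩
      · rintro ⟨v, hv, rfl⟩
        exact hπZ t0 v (hnd v (hKne v hv.1) hv.2).1 hv.2
    choose! N hN hN' using H2
    obtain ⟨s, hs, hcov⟩ := hcomp.elim_nhds_subcover N hN
    have hsub : (ZZ fun i => f0 i + t0 • f1 i) ⊆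
        ⋃ x ∈ s, (N x ∩ ZZ fun i => f0 i + t0 • f1 i) := by
      intro y hy
      obtain ⟨x, hx, hyx⟩ := Set.mem_iUnion₂.1 (hcov hy)
      exact Set.mem_biUnion (s := (s : Set _)) (t := fun x => N x ∩ ZZ fun i => f0 i + t0 • f1 i) hx ⟨hyx, hy⟩
    refine Set.Finite.subset ?_ hsub
    exact s.finite_toSet.biUnion fun x hx => ((hN' x (hs x hx)).self_of_nhds).finite
  exact ⟨hfin, local_count (fun t => ZZ fun i => f0 i + t • f1 i) t0 hfin H1 H2 H3⟩

theorem zz_fermat {r : ℕ} (δ : Fin r → ℕ) (hδ : ∀ i, 1 ≤ δ i) :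
    (ZZ fun i => (X (Fin.castSucc i) ^ δ i - X (Fin.last r) ^ δ i :
      MvPolynomial (Fin (r + 1)) ℂ)).ncard = ∏ i, δ i := by
  classical
  have : (ZZ fun i => (X (Fin.castSucc i) ^ δ i - X (Fin.last r) ^ δ i :
      MvPolynomial (Fin (r + 1)) ℂ)) =
      ((Fintype.piFinset fun i => Polynomial.nthRootsFinset (δ i) (1 : ℂ) :
        Finset (Fin r → ℂ)) : Set (Fin r → ℂ)) := by
    ext x
    simp only [ZZ, Set.mem_ofPred_eq, Finset.mem_coe, Fintype.mem_piFinset]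
    refine forall_congr' fun i => ?_
    rw [Polynomial.mem_nthRootsFinset (hδ i)]
    simp [sub_eq_zero]
  rw [this, Set.ncard_coe_finset, Fintype.card_piFinset]
  refine Finset.prod_congr rfl fun i _ => ?_
  exact (Complex.isPrimitiveRoot_exp (δ i) (by have := hδ i; omega)).card_nthRootsFinset

theorem nondeg_fermat {r : ℕ} (δ : Fin r → ℕ) (hδ : ∀ i, 1 ≤ δ i) :
    Nondeg fun i => (X (Fin.castSucc i) ^ δ i - X (Fin.last r) ^ δ i :
      MvPolynomial (Fin (r + 1)) ℂ) := by
  intro v hv hz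
  have hz' : ∀ i, v (Fin.castSucc i) ^ δ i = v (Fin.last r) ^ δ i := by
    intro i; simpa [sub_eq_zero] using hz i
  have hl : v (Fin.last r) ≠ 0 := by
    intro hl
    apply hv
    funext i
    refine Fin.lastCases hl (fun j => ?_) i
    have := hz' j
    rw [hl, zero_pow (by have := hδ j; omega)] at this
    exact eq_zero_of_pow_eq_zero this
  refine ⟨hl, ?_⟩
  have : (Matrix.of fun i j => eval v (pderiv (Fin.castSucc j)
      (X (Fin.castSucc i) ^ δ i - X (Fin.last r) ^ δ i : MvPolynomial (Fin (r + 1)) ℂ))) =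
      Matrix.diagonal fun i => (δ i : ℂ) * v (Fin.castSucc i) ^ (δ i - 1) := by
    ext i j
    rw [Matrix.of_apply, Matrix.diagonal_apply]
    have hne : Fin.last r ≠ Fin.castSucc j := (Fin.castSucc_lt_last j).ne'
    by_cases hij : i = j
    · subst hij
      simp [pderiv_X_of_ne hne]
    · have : Fin.castSucc i ≠ Fin.castSucc j := fun h => hij (Fin.castSucc_injective _ h)
      simp [pderiv_X_of_ne hne, pderiv_X_of_ne this, hij]
  rw [this, Matrix.det_diagonal, Finset.prod_ne_zero_iff]
  intro i _
  refine mul_ne_zero (by have := hδ i; exact_mod_cast (by omega)) (pow_ne_zero _ ?_)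
  intro h0
  have := hz' i
  rw [h0, zero_pow (by have := hδ i; omega)] at this
  exact hl (eq_zero_of_pow_eq_zero this.symm)

theorem core {M : Type*} [AddCommGroup M] [Module ℂ M] {r : ℕ} (δ : Fin r → ℕ)
    (hδ : ∀ i, 1 ≤ δ i) (ψ : Fin r → M →ₗ[ℂ] MvPolynomial (Fin (r + 1)) ℂ)
    (hψ : ∀ i c, (ψ i c).IsHomogeneous (δ i)) (c0 : M)
    (hc0 : ∀ i, ψ i c0 = X (Fin.castSucc i) ^ δ i - X (Fin.last r) ^ δ i) :
    ∃ g : M → ℂ, IsPolynomialFun g ∧ g c0 ≠ 0 ∧ ∀ c, g c ≠ 0 →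
      Nondeg (fun i => ψ i c) ∧ (ZZ fun i => ψ i c).Finite ∧
        (ZZ fun i => ψ i c).ncard = ∏ i, δ i := by
  classical
  let J : M → MvPolynomial (Fin (r + 1)) ℂ := fun c =>
    (Matrix.of fun i j => pderiv (Fin.castSucc j) (ψ i c)).det
  have hJ : ∀ c v, eval v (J c) =
      (Matrix.of fun i j => eval v (pderiv (Fin.castSucc j) (ψ i c))).det := by
    intro c v
    simp only [J, RingHom.map_det]
    rfl
  let F : Option (Fin r) → M → MvPolynomial (Fin (r + 1)) ℂ := fun o c =>
    o.elim (X (Fin.last r) * J c) (fun i => ψ i c)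
  let e : Option (Fin r) → ℕ := fun o => o.elim (1 + ∑ i, (δ i - 1)) δ
  obtain ⟨g, hg, hg0, hgz⟩ := resultant_exists F e (by
      rintro (_ | i)
      · refine (PolyFam.const _).mul (PolyFam.det fun i j => ?_)
        exact PolyFam.linear ((pderiv (Fin.castSucc j)).toLinearMap.comp (ψ i))
      · exact PolyFam.linear (ψ i)) (by
      rintro (_ | i) c
      · refine (isHomogeneous_X _ _).mul ?_
        simp only [J, Matrix.det_apply]
        refine IsHomogeneous.sum _ _ _ fun σ _ => ?_
        have : (∏ i, (Matrix.of fun i j => pderiv (Fin.castSucc j) (ψ i c)) (σ i) i).IsHomogeneous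
            (∑ i, (δ (σ i) - 1)) :=
          IsHomogeneous.prod _ _ _ fun i _ => (hψ (σ i) c).pderiv
        rw [Equiv.sum_comp σ (fun i => δ i - 1)] at this
        rcases Int.units_eq_one_or (Equiv.Perm.sign σ) with h | h
        · simpa [h] using this
        · simpa [h] using this.neg
      · exact hψ i c) c0 (by
      intro v hv
      by_contra hne
      have hz : ∀ i, eval v (ψ i c0) = 0 := fun i => hv (some i)
      have := nondeg_fermat δ hδ v hne (by simpa only [hc0] using hz)
      have h2 := hv none
      simp only [F, Option.elim, map_mul, eval_X, hJ, hc0] at h2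
      exact mul_ne_zero this.1 this.2 h2)
  have hnd : ∀ c, g c ≠ 0 → Nondeg (fun i => ψ i c) := by
    intro c hc v hv hz
    by_contra hcon
    apply hv
    apply hgz c hc
    rintro (_ | i)
    · simp only [F, Option.elim, map_mul, eval_X, hJ]
      rw [mul_eq_zero]
      by_contra! h
      exact hcon h
    · exact hz i
  refine ⟨g, hg, hg0, fun c hc => ⟨hnd c hc, ?_⟩⟩
  obtain ⟨q, hq⟩ := hg.line c0 (c - c0)
  have hloc : ∀ t : ℂ, q.eval t ≠ 0 → _ := fun t ht =>
    zz_local (fun i => ψ i c0) (fun i => ψ i (c - c0)) δ (fun i => hψ i _) (fun i => hψ i _) t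
      (by
        have := hnd (c0 + t • (c - c0)) (by rw [← hq]; exact ht)
        simpa only [map_add, map_smul] using this)
  have hq0 : q.eval 0 ≠ 0 := by rw [hq]; simpa using hg0
  have hq1 : q.eval 1 ≠ 0 := by rw [hq]; simpa using hc
  have hqne : q ≠ 0 := by rintro rfl; simp at hq0
  have hconn : IsPreconnected ({t : ℂ | q.eval t ≠ 0}) := by
    have hcount : ({t : ℂ | q.eval t = 0}).Countable :=
      (Polynomial.finite_setOfPred_isRoot hqne).countable
    exact (hcount.isConnected_compl_of_one_lt_rank (by simp)).isPreconnected
  have hco : ContinuousOn (fun t : ℂ => (ZZ fun i => ψ i c0 + t • ψ i (c - c0)).ncard)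
      {t : ℂ | q.eval t ≠ 0} := by
    intro t ht
    refine ContinuousAt.continuousWithinAt ?_
    exact continuousAt_const.congr ((hloc t ht).2.mono fun s hs => hs.symm)
  have heq := hconn.constant hco (x := 1) (y := 0) hq1 hq0
  have e1 : (fun i => ψ i c0 + (1 : ℂ) • ψ i (c - c0)) = fun i => ψ i c := by
    funext i; simp
  have e0 : (fun i => ψ i c0 + (0 : ℂ) • ψ i (c - c0)) =
      fun i => X (Fin.castSucc i) ^ δ i - X (Fin.last r) ^ δ i := by
    funext i; simp [hc0]
  refine ⟨?_, ?_⟩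
  · have := (hloc 1 hq1).1
    rwa [e1] at this
  · rw [e1, e0, zz_fermat δ hδ] at heq
    exact heq

theorem lines_aux {r : ℕ} (e δ : Fin r → ℕ) (he : Function.Injective e)
    (p : Fin r → MvPolynomial (Fin (r + 1 + 1)) ℂ) (f : Fin r → MvPolynomial (Fin (r + 1)) ℂ)
    (hpf : ∀ i (s : ℂ) (w : Fin (r + 1) → ℂ),
      eval (Fin.cons (α := fun _ => ℂ) s w) (p i) = eval w (f i))
    (hf : ∀ i, (f i).IsHomogeneous (δ i)) (hnd : Nondeg f) (hfin : (ZZ f).Finite) :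
    ({W : Submodule ℂ (Fin (r + 1 + 1) → ℂ) |
        Module.finrank ℂ W = 2 ∧ (Pi.single 0 1 : Fin (r + 1 + 1) → ℂ) ∈ W ∧
        ∀ v ∈ W, eval v (∑ i, X 0 ^ e i * p i) = 0}).Finite ∧
    ({W : Submodule ℂ (Fin (r + 1 + 1) → ℂ) |
        Module.finrank ℂ W = 2 ∧ (Pi.single 0 1 : Fin (r + 1 + 1) → ℂ) ∈ W ∧
        ∀ v ∈ W, eval v (∑ i, X 0 ^ e i * p i) = 0}).ncard = (ZZ f).ncard := by
  classical
  set e0 : Fin (r + 1 + 1) → ℂ := Pi.single 0 1 with he0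
  let u : (Fin r → ℂ) → Fin (r + 1 + 1) → ℂ := fun x =>
    Fin.cons (α := fun _ => ℂ) 0 (Fin.snoc (α := fun _ => ℂ) x 1)
  have hcomb : ∀ (s b : ℂ) (w : Fin (r + 1) → ℂ),
      s • e0 + b • (Fin.cons (α := fun _ => ℂ) 0 w : Fin (r + 1 + 1) → ℂ) =
        Fin.cons (α := fun _ => ℂ) s (b • w) := by
    intro s b w
    funext i
    refine Fin.cases ?_ (fun j => ?_) i <;> simp [he0]
  have hul : ∀ x, u x (Fin.last r).succ = 1 := by intro x; simp [u]
  have huc : ∀ x j, u x (Fin.castSucc j).succ = x j := by intro x j; simp [u]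
  have hrank : ∀ x, Module.finrank ℂ (Submodule.span ℂ {e0, u x}) = 2 := by
    intro x
    have hli : LinearIndependent ℂ ![e0, u x] := by
      rw [LinearIndependent.pair_iff]
      intro s b h
      have h' := hcomb s b (Fin.snoc (α := fun _ => ℂ) x 1)
      have h2 : (Fin.cons (α := fun _ => ℂ) s (b • Fin.snoc (α := fun _ => ℂ) x 1) :
        Fin (r + 1 + 1) → ℂ) = 0 := h'.symm.trans h
      have a1 := congrFun h2 0
      have a2 := congrFun h2 (Fin.last r).succ
      simp only [Fin.cons_zero, Fin.cons_succ, Pi.smul_apply, Fin.snoc_last, smul_eq_mul, mul_one,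
        Pi.zero_apply] at a1 a2
      exact ⟨a1, a2⟩
    have := finrank_span_eq_card hli
    rw [Matrix.range_cons, Matrix.range_cons, Matrix.range_empty, Set.union_empty,
      Set.singleton_union] at this
    simpa using this
  have hinj : Function.Injective fun x => Submodule.span ℂ {e0, u x} := by
    intro x y hxy
    have hmem : u x ∈ Submodule.span ℂ {e0, u y} := by
      have hxy' : Submodule.span ℂ {e0, u x} = Submodule.span ℂ {e0, u y} := hxy
      rw [← hxy']
      exact Submodule.subset_span (by simp)
    obtain ⟨a, b, hab⟩ := Submodule.mem_span_pair.1 hmem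
    have h1 := congrFun hab (Fin.last r).succ
    have hb : b = 1 := by
      simp only [Pi.add_apply, Pi.smul_apply, smul_eq_mul, hul, mul_one] at h1
      simpa [he0] using h1
    funext j
    have h2 := congrFun hab (Fin.castSucc j).succ
    simp only [Pi.add_apply, Pi.smul_apply, smul_eq_mul, huc, hb, one_mul] at h2
    simpa [he0] using h2.symm
  have hevsum : ∀ (s : ℂ) (w : Fin (r + 1) → ℂ),
      eval (Fin.cons (α := fun _ => ℂ) s w) (∑ i, X 0 ^ e i * p i) =
        ∑ i, s ^ e i * eval w (f i) := by
    intro s w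
    simp [hpf]
  have hset : {W : Submodule ℂ (Fin (r + 1 + 1) → ℂ) |
        Module.finrank ℂ W = 2 ∧ e0 ∈ W ∧
        ∀ v ∈ W, eval v (∑ i, X 0 ^ e i * p i) = 0} =
      (fun x => Submodule.span ℂ {e0, u x}) '' ZZ f := by
    ext W
    constructor
    · rintro ⟨h2, hmem, hvan⟩
      have hex : ∃ w ∈ W, Fin.tail w ≠ 0 := by
        by_contra! hcon
        have hle : W ≤ Submodule.span ℂ {e0} := by
          intro w hw
          rw [Submodule.mem_span_singleton]
          refine ⟨w 0, ?_⟩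
          have := hcon w hw
          funext i
          refine Fin.cases ?_ (fun j => ?_) i
          · simp [he0]
          · have h3 := congrFun this j
            simp only [Fin.tail, Pi.zero_apply] at h3
            simp [he0, h3]
        have h4 := Submodule.finrank_mono hle
        have h5 := finrank_span_le_card (R := ℂ) ({e0} : Set (Fin (r + 1 + 1) → ℂ))
        simp at h5
        omega
      obtain ⟨w, hw, hwne⟩ := hex
      have hz : ∀ i, eval (Fin.tail w) (f i) = 0 := by
        have hs : ∀ s : ℂ, ∑ i, s ^ e i * eval (Fin.tail w) (f i) = 0 := by
          intro s
          rw [← hevsum]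
          apply hvan
          have : (Fin.cons (α := fun _ => ℂ) s (Fin.tail w) : Fin (r + 1 + 1) → ℂ) =
              w + (s - w 0) • e0 := by
            funext i
            refine Fin.cases ?_ (fun j => ?_) i <;> simp [he0, Fin.tail]
          rw [this]
          exact W.add_mem hw (W.smul_mem _ hmem)
        have hP : (∑ i, Polynomial.C (eval (Fin.tail w) (f i)) * Polynomial.X ^ e i :
            Polynomial ℂ) = 0 := by
          refine Polynomial.funext fun s => ?_
          rw [Polynomial.eval_finsetSum, Polynomial.eval_zero, ← hs s]
          refine Finset.sum_congr rfl fun i _ => ?_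
          simp only [Polynomial.eval_mul, Polynomial.eval_C, Polynomial.eval_pow,
            Polynomial.eval_X]
          ring
        intro i
        have := congrArg (fun q => Polynomial.coeff q (e i)) hP
        simpa [Polynomial.finsetSum_coeff, Polynomial.coeff_X_pow, he.eq_iff] using this
      have hl := (hnd _ hwne hz).1
      set v := Fin.tail w with hv
      let x : Fin r → ℂ := fun i => v (Fin.castSucc i) / v (Fin.last r)
      have hx : (Fin.snoc (α := fun _ => ℂ) x 1 : Fin (r + 1) → ℂ) = (v (Fin.last r))⁻¹ • v := by
        funext i
        refine Fin.lastCases ?_ (fun j => ?_) i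
        · simp [hl]
        · simp [x, div_eq_inv_mul]
      refine ⟨x, ?_, ?_⟩
      · intro i
        rw [hx, homog_eval_smul (hf i), hz, mul_zero]
      · refine Submodule.eq_of_le_of_finrank_eq ?_ ((hrank x).trans h2.symm)
        rw [Submodule.span_le]
        rintro y (rfl | rfl)
        · exact hmem
        · have : u x = (v (Fin.last r))⁻¹ • (w + (- w 0) • e0) := by
            simp only [u, hx]
            funext i
            refine Fin.cases ?_ (fun j => ?_) i <;> simp [he0, hv, Fin.tail]
          rw [this]
          exact W.smul_mem _ (W.add_mem hw (W.smul_mem _ hmem))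
    · rintro ⟨x, hx, rfl⟩
      refine ⟨hrank x, Submodule.subset_span (by simp), ?_⟩
      intro v hv
      obtain ⟨a, b, rfl⟩ := Submodule.mem_span_pair.1 hv
      rw [hcomb, hevsum]
      refine Finset.sum_eq_zero fun i _ => ?_
      rw [homog_eval_smul (hf i), hx i, mul_zero, mul_zero]
  rw [hset]
  exact ⟨hfin.image _, Set.ncard_image_of_injective _ hinj⟩

def dropZero (r : ℕ) : MvPolynomial (Fin (r + 1 + 1)) ℂ →ₐ[ℂ] MvPolynomial (Fin (r + 1)) ℂ :=
  aeval (Fin.cons (α := fun _ => MvPolynomial (Fin (r + 1)) ℂ) 0 X)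

theorem dropZero_homog {r k : ℕ} {p : MvPolynomial (Fin (r + 1 + 1)) ℂ} (hp : p.IsHomogeneous k) :
    (dropZero r p).IsHomogeneous k := by
  have := hp.aeval (Fin.cons (α := fun _ => MvPolynomial (Fin (r + 1)) ℂ) 0 X) (n := 1) (by
    intro i
    refine Fin.cases ?_ (fun j => ?_) i
    · exact isHomogeneous_zero _ _ _
    · exact isHomogeneous_X _ _)
  simpa [dropZero] using this

theorem dropZero_eval {r : ℕ} {p : MvPolynomial (Fin (r + 1 + 1)) ℂ}
    (hp : p ∈ supported ℂ {j : Fin (r + 1 + 1) | j ≠ 0}) (s : ℂ) (w : Fin (r + 1) → ℂ) :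
    eval (Fin.cons (α := fun _ => ℂ) s w) p = eval w (dropZero r p) := by
  rw [supported_eq_range_rename] at hp
  obtain ⟨q, rfl⟩ := hp
  change eval _ (rename _ q) = eval w (aeval _ (rename _ q))
  rw [eval_rename, aeval_rename]
  have : eval w ((aeval ((Fin.cons (α := fun _ => MvPolynomial (Fin (r + 1)) ℂ) 0 X) ∘
      (Subtype.val : {j : Fin (r + 1 + 1) | j ≠ 0} → _))) q) =
      (aeval w) ((aeval ((Fin.cons (α := fun _ => MvPolynomial (Fin (r + 1)) ℂ) 0 X) ∘
      (Subtype.val : {j : Fin (r + 1 + 1) | j ≠ 0} → _))) q) := by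
    rfl
  rw [this, comp_aeval_apply]
  change _ = eval _ q
  congr 2
  funext ⟨j, hj⟩
  revert hj
  refine Fin.cases ?_ (fun k => ?_) j
  · intro h; exact absurd rfl h
  · intro _; simp

set_option synthInstance.maxHeartbeats 1000000

/-- Let `Y = {∑_{i=m}^{d} x₀^{d-i} fᵢ = 0} ⊆ ℙⁿ` with the `fᵢ` general
homogeneous forms of degree `i` in `x₁,…,xₙ`, so that `y = [1:0:…:0]` is the unique singular
point, of multiplicity `m`. If `d = m + n − 2`, then the set of lines in `Y` through `y`
(2-dimensional subspaces of `ℂ^{n+1}` containing `e₀` on which the defining form vanishes)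
is finite of cardinality exactly `d!/(m−1)!`. -/
theorem stmt11 (n m d : ℕ) (hm : 1 ≤ m) (hmd : m ≤ d) (hn : 2 ≤ n) (hdeq : d = m + n - 2) :
    ∃ U : Set (Π _i : Fin (d + 1 - m),
        ((homogeneousSubmodule (Fin (n + 1)) ℂ (m + (_i : ℕ))) ⊓
          (Subalgebra.toSubmodule (supported ℂ {j : Fin (n + 1) | j ≠ 0})) :
            Submodule ℂ (MvPolynomial (Fin (n + 1)) ℂ))),
      IsZariskiOpen U ∧ U.Nonempty ∧
      ∀ c ∈ U,
        ({W : Submodule ℂ (Fin (n + 1) → ℂ) |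
            Module.finrank ℂ W = 2 ∧ (Pi.single 0 1 : Fin (n + 1) → ℂ) ∈ W ∧
            ∀ v ∈ W, eval v (∑ i : Fin (d + 1 - m),
              X 0 ^ (d - (m + (i : ℕ))) * ((c i : MvPolynomial (Fin (n + 1)) ℂ))) = 0}).Finite ∧
        ({W : Submodule ℂ (Fin (n + 1) → ℂ) |
            Module.finrank ℂ W = 2 ∧ (Pi.single 0 1 : Fin (n + 1) → ℂ) ∈ W ∧
            ∀ v ∈ W, eval v (∑ i : Fin (d + 1 - m),
              X 0 ^ (d - (m + (i : ℕ))) * ((c i : MvPolynomial (Fin (n + 1)) ℂ))) = 0}).ncard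
          = d.factorial / (m - 1).factorial := by
  obtain rfl : n = (d + 1 - m) + 1 := by omega
  let M := (Π _i : Fin (d + 1 - m),
        ((homogeneousSubmodule (Fin ((d + 1 - m) + 1 + 1)) ℂ (m + (_i : ℕ))) ⊓
          (Subalgebra.toSubmodule (supported ℂ {j : Fin ((d + 1 - m) + 1 + 1) | j ≠ 0})) :
            Submodule ℂ (MvPolynomial (Fin ((d + 1 - m) + 1 + 1)) ℂ)))
  let ψ : Fin (d + 1 - m) → M →ₗ[ℂ] MvPolynomial (Fin ((d + 1 - m) + 1)) ℂ := fun i =>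
    ((dropZero (d + 1 - m)).toLinearMap.comp (Submodule.subtype _)).comp (LinearMap.proj i)
  have hψ : ∀ i (c : M), ψ i c = dropZero (d + 1 - m) (c i) := fun i c => rfl
  have hXs : ∀ (j : Fin ((d + 1 - m) + 1)) (k : ℕ),
      (X j.succ ^ k : MvPolynomial (Fin ((d + 1 - m) + 1 + 1)) ℂ) ∈
        supported ℂ {j : Fin ((d + 1 - m) + 1 + 1) | j ≠ 0} := by
    intro j k
    exact Subalgebra.pow_mem _ (X_mem_supported.2 (Fin.succ_ne_zero j)) k
  let c0 : M := fun i => ⟨X (Fin.castSucc i).succ ^ (m + (i : ℕ)) -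
      X (Fin.last (d + 1 - m)).succ ^ (m + (i : ℕ)), by
    refine ⟨?_, ?_⟩
    · exact (isHomogeneous_X_pow _ _).sub (isHomogeneous_X_pow _ _)
    · exact Subalgebra.sub_mem _ (hXs _ _) (hXs _ _)⟩
  obtain ⟨g, hg, hg0, hgU⟩ := core (M := M) (fun i : Fin (d + 1 - m) => m + (i : ℕ))
    (fun i => by omega) ψ (fun i c => dropZero_homog (c i).2.1) c0 (fun i => by
      rw [hψ]
      change dropZero _ (_ - _) = _
      simp [dropZero])
  refine ⟨{c | g c ≠ 0}, ⟨{g}, by simpa using hg, ?_⟩, ⟨c0, hg0⟩, ?_⟩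
  · ext c
    simp
  · intro c hc
    obtain ⟨hnd, hfin, hcard⟩ := hgU c hc
    have hinj : Function.Injective fun i : Fin (d + 1 - m) => d - (m + (i : ℕ)) := by
      intro a b hab
      have ha := a.2
      have hb := b.2
      simp only at hab
      ext
      omega
    have hl := lines_aux (fun i : Fin (d + 1 - m) => d - (m + (i : ℕ)))
      (fun i : Fin (d + 1 - m) => m + (i : ℕ)) hinj (fun i => (c i : MvPolynomial _ ℂ))
      (fun i => ψ i c) (fun i s w => dropZero_eval (c i).2.2 s w)
      (fun i => dropZero_homog (c i).2.1) hnd hfin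
    refine ⟨hl.1, hl.2.trans (hcard.trans ?_)⟩
    rw [Fin.prod_univ_eq_prod_range (fun i => m + i) (d + 1 - m),
      ← Nat.ascFactorial_eq_prod_range, Nat.ascFactorial_eq_div' _ _ hm]
    congr 2
    omega
end
end
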